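/- arXiv:0807.0022 — 10 statements merged into one kernel-verified Lean document; each statement's English description precedes it below -/
import Mathlib

section
/- Let n ≥ 1, α ∈ (0,2], β > 0, and fix u, v ∈ ℝⁿ. Then lim_{ε→0⁺} ε^{−α}[ C_{α,β}(ε(u−v)) − C_{α,β}(εu) − C_{α,β}(εv) + 1 ] = β( ‖u‖^α + ‖v‖^α − ‖u−v‖^α ). (Up to the factor 2β, the right-hand side is the covariance of the Lévy fractional Brownian field of index α/2; this identifies the tangent field of GFGCC and shows GFGCC is locally asymptotically self-similar of order α/2.) -/
open Filter

/-!
Write `C(τ) = f(‖τ‖ ^ α)` with `f(t) = (1 + t) ^ (-β)`. Since `‖ε • τ‖ ^ α = ε ^ α * ‖τ‖ ^ α`, the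
substitution `t = ε ^ α` turns `ε ^ (-α) * (C(ε • τ) - C(0))` into a difference quotient of
`t ↦ f(t * ‖τ‖ ^ α)` at `0`, whose limit is `‖τ‖ ^ α * f'(0)`. The bracket in the theorem is the
combination of three such differences at `u - v`, `u` and `v`, and `f'(0) = -β`.
-/

open Set Topology

lemma tendsto_rpow_const_nhdsGT_zero {p : ℝ} (hp : 0 < p) :
    Tendsto (fun x : ℝ => x ^ p) (𝓝[>] 0) (𝓝[>] 0) := by
  have hcont : ContinuousWithinAt (fun x : ℝ => x ^ p) (Ioi 0) 0 :=
    (Real.continuousAt_rpow_const 0 p (Or.inr hp.le)).continuousWithinAt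
  have hpos : MapsTo (fun x : ℝ => x ^ p) (Ioi 0) (Ioi 0) := fun _ hx => Real.rpow_pos_of_pos hx p
  simpa only [Real.zero_rpow hp.ne'] using hcont.tendsto_nhdsWithin hpos

lemma hasDerivAt_one_add_rpow_at_zero (p : ℝ) :
    HasDerivAt (fun t : ℝ => (1 + t) ^ p) p 0 := by
  simpa using ((hasDerivAt_id (0 : ℝ)).const_add 1).rpow_const (p := p) (Or.inl (by simp))

section Radial

variable {E F : Type*} [SeminormedAddCommGroup E] [NormedSpace ℝ E]
  [NormedAddCommGroup F] [NormedSpace ℝ F] {f : ℝ → F} {f' : F} {p : ℝ}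

lemma norm_smul_rpow_of_nonneg {ε : ℝ} (hε : 0 ≤ ε) (w : E) :
    ‖ε • w‖ ^ p = ε ^ p * ‖w‖ ^ p := by
  rw [norm_smul_of_nonneg hε, Real.mul_rpow hε (norm_nonneg w)]

lemma tendsto_slope_mul_const_nhdsGT_zero (hf : HasDerivWithinAt f f' (Ici 0) 0) {c : ℝ}
    (hc : 0 ≤ c) :
    Tendsto (fun t : ℝ => t⁻¹ • (f (t * c) - f 0)) (𝓝[>] 0) (𝓝 (c • f')) := by
  have hscale : HasDerivWithinAt (fun t : ℝ => t * c) c (Ioi 0) 0 := by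
    simpa using ((hasDerivAt_id (0 : ℝ)).mul_const c).hasDerivWithinAt
  have hcomp : HasDerivWithinAt (fun t : ℝ => f (t * c)) (c • f') (Ioi 0) 0 :=
    hf.scomp_of_eq 0 hscale (fun _ ht => mul_nonneg (mem_Ioi.mp ht).le hc) (zero_mul c).symm
  simpa [slope_fun_def] using (hasDerivWithinAt_iff_tendsto_slope' self_notMem_Ioi).mp hcomp

lemma tendsto_rpow_neg_smul_radial_sub (hf : HasDerivWithinAt f f' (Ici 0) 0) (hp : 0 < p)
    (w : E) :
    Tendsto (fun ε : ℝ => ε ^ (-p) • (f (‖ε • w‖ ^ p) - f 0)) (𝓝[>] 0) (𝓝 (‖w‖ ^ p • f')) := by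
  have hslope := (tendsto_slope_mul_const_nhdsGT_zero hf (by positivity : 0 ≤ ‖w‖ ^ p)).comp
    (tendsto_rpow_const_nhdsGT_zero hp)
  refine hslope.congr' ?_
  filter_upwards [self_mem_nhdsWithin] with ε hε
  have hε₀ : 0 ≤ ε := (mem_Ioi.mp hε).le
  rw [Function.comp_apply, norm_smul_rpow_of_nonneg hε₀, Real.rpow_neg hε₀]

/-- The bracket is the covariance of the increments `X (ε • u) - X 0` and `X (ε • v) - X 0` of a
stationary field `X` with covariance `τ ↦ f (‖τ‖ ^ p)`. -/
lemma tendsto_rpow_neg_smul_radial_increments (hf : HasDerivWithinAt f f' (Ici 0) 0) (hp : 0 < p)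
    (u v : E) :
    Tendsto (fun ε : ℝ => ε ^ (-p) •
        (f (‖ε • (u - v)‖ ^ p) - f (‖ε • u‖ ^ p) - f (‖ε • v‖ ^ p) + f 0))
      (𝓝[>] 0) (𝓝 ((‖u - v‖ ^ p - ‖u‖ ^ p - ‖v‖ ^ p) • f')) := by
  have hlim := ((tendsto_rpow_neg_smul_radial_sub hf hp (u - v)).sub
    (tendsto_rpow_neg_smul_radial_sub hf hp u)).sub (tendsto_rpow_neg_smul_radial_sub hf hp v)
  rw [← sub_smul, ← sub_smul] at hlim
  refine hlim.congr fun ε => ?_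
  module

end Radial

theorem gfgcc_tangent_field_general {E : Type*} [SeminormedAddCommGroup E] [NormedSpace ℝ E]
    {α : ℝ} (hα : 0 < α) (β : ℝ) (u v : E) :
    Tendsto (fun ε : ℝ => ε ^ (-α) *
        ((1 + ‖ε • (u - v)‖ ^ α) ^ (-β) - (1 + ‖ε • u‖ ^ α) ^ (-β)
          - (1 + ‖ε • v‖ ^ α) ^ (-β) + 1))
      (𝓝[>] 0) (𝓝 (β * (‖u‖ ^ α + ‖v‖ ^ α - ‖u - v‖ ^ α))) := by
  have hlim := tendsto_rpow_neg_smul_radial_increments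
    (hasDerivAt_one_add_rpow_at_zero (-β)).hasDerivWithinAt hα u v
  have hval : (‖u - v‖ ^ α - ‖u‖ ^ α - ‖v‖ ^ α) • (-β) =
      β * (‖u‖ ^ α + ‖v‖ ^ α - ‖u - v‖ ^ α) := by
    rw [smul_eq_mul]; ring
  simpa only [hval, smul_eq_mul, add_zero, Real.one_rpow] using hlim

/-- The GFGCC is locally asymptotically self-similar of order `α/2`: for `α ∈ (0,2]`, `β > 0`
and fixed `u, v ∈ ℝⁿ`,
`lim_{ε→0⁺} ε^{−α}[C_{α,β}(ε(u−v)) − C_{α,β}(εu) − C_{α,β}(εv) + 1]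
  = β(‖u‖^α + ‖v‖^α − ‖u−v‖^α)`,
which (up to the factor `2β`) is the covariance of the Lévy fractional Brownian field
of index `α/2`. -/
theorem gfgcc_tangent_field (n : ℕ) (hn : 1 ≤ n) (α β : ℝ)
    (hα : α ∈ Set.Ioc (0 : ℝ) 2) (hβ : 0 < β) (u v : EuclideanSpace ℝ (Fin n)) :
    Tendsto (fun ε : ℝ => ε ^ (-α) *
        ((1 + ‖ε • (u - v)‖ ^ α) ^ (-β) - (1 + ‖ε • u‖ ^ α) ^ (-β)
          - (1 + ‖ε • v‖ ^ α) ^ (-β) + 1))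
      (nhdsWithin 0 (Set.Ioi 0))
      (nhds (β * (‖u‖ ^ α + ‖v‖ ^ α - ‖u - v‖ ^ α))) :=
  gfgcc_tangent_field_general hα.1 β u v
end

section
/- Let α ∈ (0,2), β > 0 and ω > 0. Then the improper integral lim_{R→∞} ∫₀^R cos(ωt) (1 + t^α)^{−β} dt exists and equals −Im ∫₀^∞ e^{−ωu} (1 + e^{iπα/2} u^α)^{−β} du, where (1 + e^{iπα/2} u^α)^{−β} denotes the principal branch of the complex power (note that 1 + e^{iπα/2}u^α has positive imaginary part for u > 0, so it never lies on the negative real axis). (This contour-rotation identity expresses the spectral density of the one-dimensional GFGCC as an absolutely convergent Laplace-type integral.) -/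
open Filter intervalIntegral

/-!
`e^{iωz}` decays like `e^{-ω Im z}` on the closed first quadrant, so for `g` holomorphic there and
vanishing at infinity, Cauchy's theorem on the squares `[0, R] × [0, R]` turns the integral of
`e^{iωz} g(z)` along the positive real axis into the one along the positive imaginary axis: the top
side contributes `O(R e^{-ωR})`, and the right side at most `ω⁻¹ sup |g|`, the supremum being taken
over that side. For the GFGCC, `g(z) = (1 + z^α)^{-β}` is even holomorphic on the right half-plane,
because `|arg z| ≤ π/2` and `α < 2` keep the argument of `z^α` inside `(-π, π)`.
-/

section ContourRotation

open Complex MeasureTheory Set Bornology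
open scoped Topology

lemma eventually_forall_norm_le_of_tendsto_zero {V E : Type*} [SeminormedAddGroup V]
    [SeminormedAddGroup E] {f : V → E} {s : Set V} (hf : Tendsto f (cobounded V ⊓ 𝓟 s) (𝓝 0))
    {ε : ℝ} (hε : 0 < ε) : ∀ᶠ R : ℝ in atTop, ∀ z ∈ s, R ≤ ‖z‖ → ‖f z‖ ≤ ε := by
  have hle := (tendsto_zero_iff_norm_tendsto_zero.1 hf).eventually_le_const hε
  rw [eventually_inf_principal, hasBasis_cobounded_norm.eventually_iff] at hle
  obtain ⟨R₀, -, hR₀⟩ := hle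
  filter_upwards [eventually_ge_atTop R₀] with R hR z hz hRz
  exact hR₀ (hR.trans hRz) hz

variable {E : Type*} [NormedAddCommGroup E] [NormedSpace ℂ E] {g : ℂ → E} {ω : ℝ}

/-- The modulation `z ↦ e^{iωz} g(z)` of `g` at the frequency `ω`; on the real axis it is the
integrand of a Fourier integral, on the positive imaginary axis that of a Laplace integral. -/
noncomputable def modulation (ω : ℝ) (g : ℂ → E) (z : ℂ) : E :=
  exp (ω * z * I) • g z

lemma norm_modulation (ω : ℝ) (g : ℂ → E) (z : ℂ) :
    ‖modulation ω g z‖ = Real.exp (-ω * z.im) * ‖g z‖ := by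
  simp [modulation, norm_smul, norm_exp]

lemma norm_modulation_le (ω : ℝ) {z : ℂ} {C : ℝ} (hz : ‖g z‖ ≤ C) :
    ‖modulation ω g z‖ ≤ Real.exp (-ω * z.im) * C := by
  rw [norm_modulation]
  gcongr

lemma modulation_mul_I (ω : ℝ) (g : ℂ → E) (u : ℝ) :
    modulation ω g (u * I) = exp (-(ω * u : ℝ)) • g (u * I) := by
  have hexp : (ω : ℂ) * (u * I) * I = -(ω * u : ℝ) := by
    push_cast
    linear_combination (ω * u : ℂ) * I_mul_I
  rw [modulation, hexp]

lemma continuousOn_modulation {s : Set ℂ} (ω : ℝ) (hg : ContinuousOn g s) :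
    ContinuousOn (modulation ω g) s :=
  ContinuousOn.smul (by fun_prop) hg

lemma differentiableOn_modulation {s : Set ℂ} (ω : ℝ) (hg : DifferentiableOn ℂ g s) :
    DifferentiableOn ℂ (modulation ω g) s :=
  DifferentiableOn.smul (by fun_prop) hg

lemma integral_ofReal_eq_of_differentiableOn_quadrant [CompleteSpace E] {f : ℂ → E}
    (hc : ContinuousOn f (Ici 0 ×ℂ Ici 0)) (hd : DifferentiableOn ℂ f (Ioi 0 ×ℂ Ioi 0))
    {R S : ℝ} (hR : 0 ≤ R) (hS : 0 ≤ S) :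
    ∫ x in (0 : ℝ)..R, f x =
      (∫ x in (0 : ℝ)..R, f (x + S * I)) - I • (∫ y in (0 : ℝ)..S, f (R + y * I))
        + I • ∫ y in (0 : ℝ)..S, f (y * I) := by
  have hcauchy := integral_boundary_rect_eq_zero_of_continuousOn_of_differentiableOn
    f 0 (R + S * I)
    (hc.mono fun z hz => by simp_all [mem_reProdIm])
    (hd.mono fun z hz => by simp_all [mem_reProdIm])
  simp only [zero_re, zero_im, ofReal_zero, zero_mul, add_zero, zero_add, add_re, add_im, mul_re,
    mul_im, ofReal_re, ofReal_im, I_re, I_im, mul_zero, mul_one, sub_self] at hcauchy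
  rw [← sub_eq_zero, ← hcauchy]
  abel

lemma norm_integral_modulation_horizontal_le {C R S : ℝ} (hR : 0 ≤ R)
    (hg : ∀ x : ℝ, 0 ≤ x → ‖g (x + S * I)‖ ≤ C) :
    ‖∫ x in (0 : ℝ)..R, modulation ω g (x + S * I)‖ ≤ Real.exp (-ω * S) * C * R := by
  have hbound : ∀ x ∈ uIoc 0 R, ‖modulation ω g (x + S * I)‖ ≤ Real.exp (-ω * S) * C := by
    intro x hx
    rw [uIoc_of_le hR] at hx
    simpa using norm_modulation_le ω (hg x hx.1.le)
  simpa [abs_of_nonneg hR] using norm_integral_le_of_norm_le_const hbound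

lemma integral_exp_neg_mul_le_inv (hω : 0 < ω) {S : ℝ} (hS : 0 ≤ S) :
    ∫ y in (0 : ℝ)..S, Real.exp (-ω * y) ≤ ω⁻¹ := by
  have hneg : -ω < 0 := neg_neg_of_pos hω
  calc ∫ y in (0 : ℝ)..S, Real.exp (-ω * y)
      = ∫ y in Ioc 0 S, Real.exp (-ω * y) := integral_of_le hS
    _ ≤ ∫ y in Ioi 0, Real.exp (-ω * y) :=
        setIntegral_mono_set (integrableOn_exp_mul_Ioi hneg 0)
          (Eventually.of_forall fun y => (Real.exp_pos _).le) Ioc_subset_Ioi_self.eventuallyLE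
    _ = ω⁻¹ := by
        rw [integral_exp_mul_Ioi hneg, mul_zero, Real.exp_zero, neg_div_neg_eq, one_div]

lemma norm_integral_modulation_vertical_le (hω : 0 < ω) {C R S : ℝ} (hS : 0 ≤ S)
    (hg : ∀ y : ℝ, 0 ≤ y → ‖g (R + y * I)‖ ≤ C) :
    ‖∫ y in (0 : ℝ)..S, modulation ω g (R + y * I)‖ ≤ ω⁻¹ * C := by
  have hC : 0 ≤ C := (norm_nonneg _).trans (hg 0 le_rfl)
  have hbound : ∀ y ∈ Ioc 0 S, ‖modulation ω g (R + y * I)‖ ≤ Real.exp (-ω * y) * C := by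
    intro y hy
    simpa using norm_modulation_le ω (hg y hy.1.le)
  calc ‖∫ y in (0 : ℝ)..S, modulation ω g (R + y * I)‖
      ≤ ∫ y in (0 : ℝ)..S, Real.exp (-ω * y) * C :=
        norm_integral_le_of_norm_le hS (Eventually.of_forall hbound)
          (Continuous.intervalIntegrable (by fun_prop) _ _)
    _ = (∫ y in (0 : ℝ)..S, Real.exp (-ω * y)) * C := integral_mul_const _ _
    _ ≤ ω⁻¹ * C := by gcongr; exact integral_exp_neg_mul_le_inv hω hS

lemma tendsto_integral_modulation_top (hω : 0 < ω)
    (hg : Tendsto g (cobounded ℂ ⊓ 𝓟 (Ici 0 ×ℂ Ici 0)) (𝓝 0)) :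
    Tendsto (fun R : ℝ => ∫ x in (0 : ℝ)..R, modulation ω g (x + R * I)) atTop (𝓝 0) := by
  have hdecay : Tendsto (fun R : ℝ => Real.exp (-ω * R) * 1 * R) atTop (𝓝 0) := by
    simpa [mul_comm] using tendsto_rpow_mul_exp_neg_mul_atTop_nhds_zero 1 ω hω
  refine squeeze_zero_norm' ?_ hdecay
  filter_upwards [eventually_forall_norm_le_of_tendsto_zero hg one_pos, eventually_ge_atTop 0]
    with R hgR hR
  refine norm_integral_modulation_horizontal_le hR fun x hx => hgR _ (by simp_all [mem_reProdIm]) ?_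
  simpa using (le_abs_self _).trans (abs_im_le_norm (x + R * I))

lemma tendsto_integral_modulation_right (hω : 0 < ω)
    (hg : Tendsto g (cobounded ℂ ⊓ 𝓟 (Ici 0 ×ℂ Ici 0)) (𝓝 0)) :
    Tendsto (fun R : ℝ => ∫ y in (0 : ℝ)..R, modulation ω g (R + y * I)) atTop (𝓝 0) := by
  rw [NormedAddGroup.tendsto_nhds_zero]
  intro ε hε
  filter_upwards [eventually_forall_norm_le_of_tendsto_zero hg (by positivity : 0 < ω * (ε / 2)),
    eventually_ge_atTop 0] with R hgR hR
  have hgC : ∀ y : ℝ, 0 ≤ y → ‖g (R + y * I)‖ ≤ ω * (ε / 2) := fun y hy =>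
    hgR _ (by simp_all [mem_reProdIm])
      (by simpa using (le_abs_self _).trans (abs_re_le_norm (R + y * I)))
  calc ‖∫ y in (0 : ℝ)..R, modulation ω g (R + y * I)‖
      ≤ ω⁻¹ * (ω * (ε / 2)) := norm_integral_modulation_vertical_le hω hR hgC
    _ = ε / 2 := inv_mul_cancel_left₀ hω.ne' _
    _ < ε := half_lt_self hε

lemma integrableOn_modulation_mul_I (hω : 0 < ω) (hc : ContinuousOn g (Ici 0 ×ℂ Ici 0))
    (hg : Tendsto g (cobounded ℂ ⊓ 𝓟 (Ici 0 ×ℂ Ici 0)) (𝓝 0)) :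
    IntegrableOn (fun y : ℝ => modulation ω g (y * I)) (Ioi 0) := by
  have hcont : ContinuousOn (fun y : ℝ => modulation ω g (y * I)) (Ici 0) :=
    (continuousOn_modulation ω hc).comp (by fun_prop) fun y hy => by simp_all [mem_reProdIm]
  have hO : (fun y : ℝ => ‖modulation ω g (y * I)‖) =O[atTop] fun y => Real.exp (-ω * y) := by
    refine Asymptotics.IsBigO.of_bound 1 ?_
    filter_upwards [eventually_forall_norm_le_of_tendsto_zero hg one_pos, eventually_ge_atTop 0]
      with y hgy hy
    have hle : ‖g (y * I)‖ ≤ 1 := hgy _ (by simp_all [mem_reProdIm]) (by simp [le_abs_self])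
    simpa using norm_modulation_le ω hle
  exact (integrable_norm_iff <|
    (hcont.mono Ioi_subset_Ici_self).aestronglyMeasurable measurableSet_Ioi).1
    (integrable_of_isBigO_exp_neg hω hcont.norm hO)

theorem tendsto_integral_modulation_atTop [CompleteSpace E] (hω : 0 < ω)
    (hc : ContinuousOn g (Ici 0 ×ℂ Ici 0)) (hd : DifferentiableOn ℂ g (Ioi 0 ×ℂ Ioi 0))
    (hg : Tendsto g (cobounded ℂ ⊓ 𝓟 (Ici 0 ×ℂ Ici 0)) (𝓝 0)) :
    Tendsto (fun R : ℝ => ∫ x in (0 : ℝ)..R, modulation ω g x) atTop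
      (𝓝 (I • ∫ y in Ioi (0 : ℝ), modulation ω g (y * I))) := by
  have hleft : Tendsto (fun R : ℝ => ∫ y in (0 : ℝ)..R, modulation ω g (y * I)) atTop
      (𝓝 (∫ y in Ioi (0 : ℝ), modulation ω g (y * I))) :=
    intervalIntegral_tendsto_integral_Ioi 0 (integrableOn_modulation_mul_I hω hc hg) tendsto_id
  have hsides := ((tendsto_integral_modulation_top hω hg).sub
    ((tendsto_integral_modulation_right hω hg).const_smul I)).add (hleft.const_smul I)
  rw [smul_zero, sub_zero, zero_add] at hsides
  refine hsides.congr' ?_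
  filter_upwards [eventually_ge_atTop 0] with R hR
  exact (integral_ofReal_eq_of_differentiableOn_quadrant
    (continuousOn_modulation ω hc) (differentiableOn_modulation ω hd) hR hR).symm

lemma re_modulation_ofReal {h : ℂ → ℂ} {t x : ℝ} (hx : h t = x) :
    (modulation ω h t).re = Real.cos (ω * t) * x := by
  rw [modulation, hx, smul_eq_mul, re_mul_ofReal, ← ofReal_mul, exp_ofReal_mul_I_re]

theorem tendsto_integral_cos_mul_atTop {h : ℂ → ℂ} {φ : ℝ → ℝ} (hω : 0 < ω)
    (hc : ContinuousOn h (Ici 0 ×ℂ Ici 0)) (hd : DifferentiableOn ℂ h (Ioi 0 ×ℂ Ioi 0))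
    (hh : Tendsto h (cobounded ℂ ⊓ 𝓟 (Ici 0 ×ℂ Ici 0)) (𝓝 0))
    (hφ : ∀ t : ℝ, 0 ≤ t → h t = φ t) :
    Tendsto (fun R : ℝ => ∫ t in (0 : ℝ)..R, Real.cos (ω * t) * φ t) atTop
      (𝓝 (-(∫ u in Ioi (0 : ℝ), exp (-(ω * u : ℝ)) * h (u * I)).im)) := by
  have hre := (continuous_re.tendsto _).comp (tendsto_integral_modulation_atTop hω hc hd hh)
  simp only [modulation_mul_I, smul_eq_mul, I_mul_re] at hre
  refine hre.congr' ?_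
  filter_upwards [eventually_ge_atTop 0] with R hR
  have hint : IntervalIntegrable (fun t : ℝ => modulation ω h t) volume 0 R := by
    refine ((continuousOn_modulation ω hc).comp (by fun_prop) fun t ht => ?_).intervalIntegrable
    rw [uIcc_of_le hR] at ht
    simpa [mem_reProdIm] using ht.1
  calc (∫ t in (0 : ℝ)..R, modulation ω h t).re
      = ∫ t in (0 : ℝ)..R, (modulation ω h t).re := (reCLM.intervalIntegral_comp_comm hint).symm
    _ = ∫ t in (0 : ℝ)..R, Real.cos (ω * t) * φ t := integral_congr fun t ht => by
        rw [uIcc_of_le hR] at ht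
        exact re_modulation_ofReal (hφ t ht.1)

end ContourRotation

section GFGCC

open Complex Set Bornology
open scoped Topology Real

lemma one_add_cpow_ofReal_mem_slitPlane {α : ℝ} {z : ℂ} (h : |arg z * α| < π) :
    1 + z ^ (α : ℂ) ∈ slitPlane := by
  rw [mem_slitPlane_iff, add_re, add_im, one_re, one_im, zero_add, cpow_ofReal_re, cpow_ofReal_im]
  rcases eq_or_ne (arg z * α) 0 with h0 | h0
  · left
    rw [h0, Real.cos_zero]
    positivity
  · right
    have hz : z ≠ 0 := by
      rintro rfl
      simp at h0
    have hsin : Real.sin (arg z * α) ≠ 0 := fun hs =>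
      h0 ((Real.sin_eq_zero_iff_of_lt_of_lt (abs_lt.1 h).1 (abs_lt.1 h).2).1 hs)
    exact mul_ne_zero (Real.rpow_pos_of_pos (norm_pos_iff.2 hz) α).ne' hsin

lemma one_add_cpow_ofReal_mem_slitPlane_of_re_nonneg {α : ℝ} (hα : |α| < 2) {z : ℂ}
    (hz : 0 ≤ z.re) : 1 + z ^ (α : ℂ) ∈ slitPlane := by
  refine one_add_cpow_ofReal_mem_slitPlane ?_
  have harg : |arg z| ≤ π / 2 := abs_arg_le_pi_div_two_iff.2 hz
  calc |arg z * α| = |arg z| * |α| := abs_mul _ _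
    _ ≤ π / 2 * |α| := by gcongr
    _ < π := by linarith [mul_lt_mul_of_pos_left hα Real.pi_div_two_pos]

lemma tendsto_cpow_ofReal_cobounded {α : ℝ} (hα : 0 < α) :
    Tendsto (fun z : ℂ => z ^ (α : ℂ)) (cobounded ℂ) (cobounded ℂ) := by
  rw [← tendsto_norm_atTop_iff_cobounded]
  simpa only [norm_cpow_real, Function.comp_def] using
    (tendsto_rpow_atTop hα).comp tendsto_norm_cobounded_atTop

lemma tendsto_cpow_neg_ofReal_cobounded {β : ℝ} (hβ : 0 < β) :
    Tendsto (fun z : ℂ => z ^ (-(β : ℂ))) (cobounded ℂ) (𝓝 0) := by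
  rw [tendsto_zero_iff_norm_tendsto_zero]
  simpa only [← ofReal_neg, norm_cpow_real, Function.comp_def] using
    (tendsto_rpow_neg_atTop hβ).comp tendsto_norm_cobounded_atTop

lemma ofReal_mul_I_cpow {u : ℝ} (hu : 0 < u) (s : ℂ) :
    (u * I : ℂ) ^ s = exp (π * s / 2 * I) * (u : ℂ) ^ s := by
  have hu' : (u : ℂ) ≠ 0 := ofReal_ne_zero.2 hu.ne'
  rw [cpow_def_of_ne_zero (mul_ne_zero hu' I_ne_zero), log_ofReal_mul hu I_ne_zero, log_I,
    cpow_def_of_ne_zero hu', ofReal_log hu.le, ← exp_add]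
  congr 1
  ring

/-- The analytic continuation `C_{α,β}(z) = (1 + z^α)^{-β}` of the GFGCC covariance from the
positive real axis, both powers being principal branches; see `gfgccCov_ofReal`. -/
noncomputable def gfgccCov (α β : ℝ) (z : ℂ) : ℂ :=
  (1 + z ^ (α : ℂ)) ^ (-(β : ℂ))

variable {α β : ℝ}

lemma gfgccCov_ofReal (α β : ℝ) {t : ℝ} (ht : 0 ≤ t) :
    gfgccCov α β t = ((1 + t ^ α) ^ (-β) : ℝ) := by
  have hbase : 0 ≤ 1 + t ^ α := by positivity
  rw [gfgccCov, ofReal_cpow hbase, ofReal_add, ofReal_one, ofReal_cpow ht, ofReal_neg]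

lemma gfgccCov_mul_I (α β : ℝ) {u : ℝ} (hu : 0 < u) :
    gfgccCov α β (u * I) =
      (1 + exp (π * α / 2 * I) * (u : ℂ) ^ (α : ℂ)) ^ (-(β : ℂ)) := by
  rw [gfgccCov, ofReal_mul_I_cpow hu]

lemma continuousOn_gfgccCov (hα : α ∈ Ioo (0 : ℝ) 2) (β : ℝ) :
    ContinuousOn (gfgccCov α β) {z | 0 ≤ z.re} := by
  intro z hz
  have hpow : ContinuousAt (fun w : ℂ => w ^ (α : ℂ)) z :=
    continuousAt_cpow_const_of_re_pos (Or.inl hz) (by simpa using hα.1)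
  exact ((hpow.const_add 1).cpow continuousAt_const <|
    one_add_cpow_ofReal_mem_slitPlane_of_re_nonneg ((abs_of_pos hα.1).trans_lt hα.2)
      hz).continuousWithinAt

lemma differentiableOn_gfgccCov (hα : |α| < 2) (β : ℝ) :
    DifferentiableOn ℂ (gfgccCov α β) {z | 0 < z.re} := fun _ hz =>
  (((differentiableAt_id.cpow_const (Or.inl hz)).const_add 1).cpow_const <|
    one_add_cpow_ofReal_mem_slitPlane_of_re_nonneg hα (le_of_lt hz)).differentiableWithinAt

lemma tendsto_gfgccCov_cobounded (hα : 0 < α) (hβ : 0 < β) :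
    Tendsto (gfgccCov α β) (cobounded ℂ) (𝓝 0) :=
  (tendsto_cpow_neg_ofReal_cobounded hβ).comp <|
    (tendsto_const_add_cobounded 1).comp (tendsto_cpow_ofReal_cobounded hα)

end GFGCC

/-- Contour-rotation identity for the spectral density of the one-dimensional GFGCC:
for `α ∈ (0,2)`, `β > 0` and `ω > 0`, the improper integral
`lim_{R→∞} ∫₀^R cos(ωt)(1+t^α)^{−β} dt` exists and equals
`−Im ∫₀^∞ e^{−ωu}(1 + e^{iπα/2}u^α)^{−β} du` (principal branch). -/
theorem gfgcc_spectral_contour_rotation (α β ω : ℝ)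
    (hα : α ∈ Set.Ioo (0 : ℝ) 2) (hβ : 0 < β) (hω : 0 < ω) :
    Tendsto (fun R : ℝ => ∫ t in (0 : ℝ)..R, Real.cos (ω * t) * (1 + t ^ α) ^ (-β)) atTop
      (nhds (-(∫ u in Set.Ioi (0 : ℝ),
          Complex.exp (-(ω * u : ℝ)) *
            (1 + Complex.exp ((Real.pi : ℂ) * (α : ℂ) / 2 * Complex.I) * (u : ℂ) ^ (α : ℂ))
              ^ (-(β : ℂ))).im)) := by
  have hrotate := tendsto_integral_cos_mul_atTop (h := gfgccCov α β) hω
    ((continuousOn_gfgccCov hα β).mono fun _ hz => hz.1)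
    ((differentiableOn_gfgccCov ((abs_of_pos hα.1).trans_lt hα.2) β).mono fun _ hz => hz.1)
    ((tendsto_gfgccCov_cobounded hα.1 hβ).mono_left inf_le_left)
    (fun t ht => gfgccCov_ofReal α β ht)
  rwa [MeasureTheory.setIntegral_congr_fun measurableSet_Ioi
    fun _ hu => by rw [gfgccCov_mul_I α β hu]] at hrotate
end

section
/- Let α ∈ (0,2), β > 0 and a > 0. Then −(2/π) Im ∫₀^∞ u (1 + e^{iπα/2} u^α)^{−β} (u² + a²)^{−1} du = (1 + a^α)^{−β}, where (1 + e^{iπα/2} u^α)^{−β} denotes the principal branch of the complex power. (This residue identity verifies that the Laplace-type integral formula is indeed the spectral density of GFGCC: it recovers the generalized Cauchy covariance as the inverse Fourier transform of the claimed spectral density.) -/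
open Asymptotics Bornology Complex Filter MeasureTheory ProbabilityTheory Set Topology
open scoped ComplexConjugate

/-!
Let `f z = (1 + z ^ α) ^ (-β)`, holomorphic on the right half-plane and continuous up to the
boundary because `|arg (z ^ α)| ≤ π α / 2 < π` there. The function `g z = z * f z` is `o(z)` at
infinity, which is exactly what is needed for it to be the Poisson integral of its values on the
imaginary axis: the quotient `(g z - g w) / ((z - w) (z + conj w))` has a removable singularity at
`w`, its other pole is the mirror image of `w`, outside the half-plane, and it is `o(1 / z)`, so by
Cauchy's theorem on large rectangles its integral along the imaginary axis vanishes. The Poisson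
kernel of the half-plane is the density of a Cauchy distribution, which has mass one. At `w = a`
this gives `a f(a) = (a / π) ∫ i y f(i y) / (y² + a²) dy`, and `f (conj z) = conj (f z)` folds the
integral onto the positive half-line.
-/

section HalfPlane

variable {E : Type*} [NormedAddCommGroup E] [NormedSpace ℂ E] {f g : ℂ → E} {w : ℂ}

theorem norm_integral_imaginary_axis_le (hf : DiffContOnCl ℂ f {z | 0 < z.re}) {R C : ℝ}
    (hR : 0 ≤ R) (hC : ∀ z : ℂ, 0 ≤ z.re → R ≤ ‖z‖ → ‖f z‖ ≤ C) :
    ‖∫ y in (-R)..R, f (y * I)‖ ≤ 4 * R * C := by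
  have cauchy :=
    integral_boundary_rect_eq_zero_of_continuousOn_of_differentiableOn f ⟨0, -R⟩ ⟨R, R⟩
      (hf.continuousOn.mono fun z hz ↦ by
        rw [closure_setOfPred_lt_re]
        exact (uIcc_of_le hR ▸ hz.1).1)
      (hf.differentiableOn.mono fun z hz ↦ by
        simpa [hR] using hz.1.1)
  simp only [ofReal_zero, zero_add] at cauchy
  have horizontal {t : ℝ} (ht : |t| = R) : ‖∫ x in (0 : ℝ)..R, f (x + t * I)‖ ≤ C * R := by
    refine (intervalIntegral.norm_integral_le_of_norm_le_const fun x hx ↦ hC _ ?_ ?_).trans_eq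
      (by rw [sub_zero, abs_of_nonneg hR])
    · simpa using (uIoc_of_le hR ▸ hx).1.le
    · simpa [ht] using abs_im_le_norm (x + t * I)
  have vertical : ‖∫ y in (-R)..R, f (R + y * I)‖ ≤ C * (2 * R) := by
    refine (intervalIntegral.norm_integral_le_of_norm_le_const fun y _ ↦ hC _ ?_ ?_).trans_eq
      (by rw [sub_neg_eq_add, ← two_mul, abs_of_nonneg (by positivity)])
    · simpa
    · simpa [abs_of_nonneg hR] using abs_re_le_norm (R + y * I)
  calc ‖∫ y in (-R)..R, f (y * I)‖
      = ‖I • ∫ y in (-R)..R, f (y * I)‖ := by rw [norm_smul, norm_I, one_mul]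
    _ = ‖(∫ x in (0 : ℝ)..R, f (x + (-R : ℝ) * I)) - (∫ x in (0 : ℝ)..R, f (x + R * I))
          + I • ∫ y in (-R)..R, f (R + y * I)‖ := by rw [sub_eq_zero.1 cauchy]
    _ ≤ C * R + C * R + C * (2 * R) := by
        refine (norm_add_le _ _).trans (add_le_add ((norm_sub_le _ _).trans (add_le_add
          (horizontal (by simp [abs_of_nonneg hR])) (horizontal (abs_of_nonneg hR)))) ?_)
        rwa [norm_smul, norm_I, one_mul]
    _ = 4 * R * C := by ring

theorem tendsto_integral_imaginary_axis_zero (hf : DiffContOnCl ℂ f {z | 0 < z.re})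
    (ho : f =o[cobounded ℂ ⊓ 𝓟 {z | 0 ≤ z.re}] fun z ↦ z⁻¹) :
    Tendsto (fun R : ℝ ↦ ∫ y in (-R)..R, f (y * I)) atTop (𝓝 0) := by
  rw [Metric.tendsto_nhds]
  intro ε hε
  obtain ⟨r, -, hr⟩ := (hasBasis_cobounded_norm.inf_principal _).eventually_iff.1
    (ho.bound (show 0 < ε / 8 by positivity))
  filter_upwards [eventually_ge_atTop r, eventually_gt_atTop 0] with R hrR hR
  have bound (z : ℂ) (hz : 0 ≤ z.re) (hRz : R ≤ ‖z‖) : ‖f z‖ ≤ ε / 8 * R⁻¹ := by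
    refine (hr ⟨hrR.trans hRz, hz⟩).trans ?_
    rw [norm_inv]
    gcongr
  calc dist (∫ y in (-R)..R, f (y * I)) 0 ≤ 4 * R * (ε / 8 * R⁻¹) := by
        rw [dist_zero_right]
        exact norm_integral_imaginary_axis_le hf hR.le bound
    _ = ε / 2 := by field_simp; norm_num
    _ < ε := half_lt_self hε

/-- The function `z ↦ (g z - g w) / ((z - w) (z + conj w))`, with its singularity at `w` removed:
`w` and `-conj w` are mirror images in the imaginary axis, where this is `g w - g z` times the
Poisson kernel, up to the constant `π / re w`. -/
noncomputable def halfPlaneQuotient (g : ℂ → E) (w z : ℂ) : E :=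
  (z + conj w)⁻¹ • dslope g w z

theorem halfPlaneQuotient_of_ne {z : ℂ} (hz : z ≠ w) :
    halfPlaneQuotient g w z = ((z + conj w) * (z - w))⁻¹ • (g z - g w) := by
  rw [halfPlaneQuotient, dslope_of_ne _ hz, slope_def_module, smul_smul, mul_inv]

theorem mul_I_add_conj_mul_mul_I_sub (w : ℂ) (y : ℝ) :
    (y * I + conj w) * (y * I - w) = -(((y - w.im) ^ 2 + w.re ^ 2 : ℝ) : ℂ) := by
  apply Complex.ext <;> simp [-ofReal_pow] <;> ring

theorem cauchyPDFReal_smul_eq_sub_halfPlaneQuotient (hw : 0 < w.re) (y : ℝ) :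
    cauchyPDFReal w.im w.re.toNNReal y • g (y * I)
      = cauchyPDFReal w.im w.re.toNNReal y • g w
        - (Real.pi⁻¹ * w.re) • halfPlaneQuotient g w (y * I) := by
  have hne : y * I ≠ w := fun h ↦ by simp [← h] at hw
  rw [halfPlaneQuotient_of_ne hne, mul_I_add_conj_mul_mul_I_sub, cauchyPDFReal_def,
    Real.coe_toNNReal _ hw.le, ← ofReal_neg, ← ofReal_inv, coe_smul, smul_smul, inv_neg, mul_neg,
    neg_smul, sub_neg_eq_add, ← smul_add, add_sub_cancel]

theorem isLittleO_halfPlaneQuotient {l : Filter ℂ} (hl : l ≤ cobounded ℂ) (hg : g =o[l] id)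
    (w : ℂ) :
    halfPlaneQuotient g w =o[l] fun z ↦ z⁻¹ := by
  have const (c : ℂ) : (fun _ ↦ c) =o[l] fun z : ℂ ↦ z := (isLittleO_const_id_cobounded c).mono hl
  have hnum : (fun z ↦ g z - g w) =o[l] fun z : ℂ ↦ z :=
    hg.sub ((isLittleO_const_id_cobounded (g w)).mono hl)
  have hden : (fun z : ℂ ↦ z * z) =O[l] fun z ↦ (z + conj w) * (z - w) :=
    (const (conj w)).right_isBigO_add'.mul (const w).right_isBigO_sub
  have hinv : (fun z ↦ ((z + conj w) * (z - w))⁻¹) =O[l] fun z : ℂ ↦ (z * z)⁻¹ :=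
    hden.inv_rev (((eventually_ne_cobounded 0).filter_mono hl).mono fun z hz hzz ↦
      absurd hzz (mul_self_ne_zero.2 hz))
  refine (hinv.smul_isLittleO hnum).congr'
    (((eventually_ne_cobounded w).filter_mono hl).mono fun z hz ↦ (halfPlaneQuotient_of_ne hz).symm)
    (.of_forall fun z ↦ ?_)
  rcases eq_or_ne z 0 with rfl | hz
  · simp
  · simp [hz]

variable [CompleteSpace E]

theorem diffContOnCl_dslope {s : Set ℂ} (hg : DiffContOnCl ℂ g s) (hs : s ∈ 𝓝 w) :
    DiffContOnCl ℂ (dslope g w) s :=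
  ⟨(differentiableOn_dslope hs).2 hg.differentiableOn,
    (continuousOn_dslope (mem_of_superset hs subset_closure)).2
      ⟨hg.continuousOn, hg.differentiableOn.differentiableAt hs⟩⟩

theorem diffContOnCl_halfPlaneQuotient (hw : 0 < w.re) (hg : DiffContOnCl ℂ g {z | 0 < z.re}) :
    DiffContOnCl ℂ (halfPlaneQuotient g w) {z | 0 < z.re} := by
  have hs : {z : ℂ | 0 < z.re} ∈ 𝓝 w := (isOpen_lt continuous_const continuous_re).mem_nhds hw
  have hden : DiffContOnCl ℂ (fun z ↦ z + conj w) {z | 0 < z.re} :=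
    (differentiable_id.add_const _).diffContOnCl
  refine (hden.inv fun z hz hzero ↦ ?_).smul (diffContOnCl_dslope hg hs)
  rw [closure_setOfPred_lt_re, mem_ofPred_eq] at hz
  have := congrArg re hzero
  simp only [add_re, conj_re, zero_re] at this
  linarith

theorem tendsto_intervalIntegral_cauchyPDFReal_smul (hw : 0 < w.re)
    (hg : DiffContOnCl ℂ g {z | 0 < z.re}) (ho : g =o[cobounded ℂ ⊓ 𝓟 {z | 0 ≤ z.re}] id) :
    Tendsto (fun R : ℝ ↦ ∫ y in (-R)..R, cauchyPDFReal w.im w.re.toNNReal y • g (y * I)) atTop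
      (𝓝 (g w)) := by
  have hpdf := integrable_cauchyPDFReal w.im (γ := w.re.toNNReal)
  have hquot := diffContOnCl_halfPlaneQuotient hw hg
  have hcont : Continuous fun y : ℝ ↦ halfPlaneQuotient g w (y * I) :=
    hquot.continuousOn.comp_continuous (by fun_prop) fun y ↦ by
      rw [closure_setOfPred_lt_re]
      simp
  have hquot_int (R : ℝ) : IntervalIntegrable
      (fun y : ℝ ↦ (Real.pi⁻¹ * w.re) • halfPlaneQuotient g w (y * I)) volume (-R) R :=
    (hcont.const_smul _).intervalIntegrable _ _
  have hmass : Tendsto (fun R : ℝ ↦ ∫ y in (-R)..R, cauchyPDFReal w.im w.re.toNNReal y) atTop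
      (𝓝 1) := by
    rw [← integral_cauchyPDFReal_eq_one w.im (Real.toNNReal_pos.2 hw).ne']
    exact intervalIntegral_tendsto_integral hpdf tendsto_neg_atTop_atBot tendsto_id
  have hlim := (hmass.smul_const (g w)).sub ((tendsto_integral_imaginary_axis_zero hquot
    (isLittleO_halfPlaneQuotient inf_le_left ho w)).const_smul (Real.pi⁻¹ * w.re))
  rw [one_smul, smul_zero, sub_zero] at hlim
  refine hlim.congr fun R ↦ ?_
  simp_rw [cauchyPDFReal_smul_eq_sub_halfPlaneQuotient hw]
  rw [intervalIntegral.integral_sub (hpdf.smul_const _).intervalIntegrable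
    (hquot_int R), intervalIntegral.integral_smul_const,
    intervalIntegral.integral_smul]

theorem integral_cauchyPDFReal_smul (hw : 0 < w.re)
    (hg : DiffContOnCl ℂ g {z | 0 < z.re}) (ho : g =o[cobounded ℂ ⊓ 𝓟 {z | 0 ≤ z.re}] id)
    (hint : Integrable fun y : ℝ ↦ cauchyPDFReal w.im w.re.toNNReal y • g (y * I)) :
    ∫ y : ℝ, cauchyPDFReal w.im w.re.toNNReal y • g (y * I) = g w :=
  tendsto_nhds_unique
    (intervalIntegral_tendsto_integral hint tendsto_neg_atTop_atBot tendsto_id)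
    (tendsto_intervalIntegral_cauchyPDFReal_smul hw hg ho)

end HalfPlane

section ConjSymm

variable {φ : ℝ → ℂ}

theorem integrable_of_conj_symm (hsymm : ∀ y, φ (-y) = conj (φ y)) (hφ : IntegrableOn φ (Ioi 0)) :
    Integrable φ := by
  have hneg : IntegrableOn (fun y ↦ φ (-y)) (Ioi 0) := by
    simp_rw [hsymm]
    exact (conjCLE : ℂ →L[ℝ] ℂ).integrable_comp hφ
  rw [← neg_zero] at hneg
  rw [← integrableOn_univ, ← Iic_union_Ioi (a := (0 : ℝ)), integrableOn_union,
    integrableOn_Iic_iff_integrableOn_Iio]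
  exact ⟨by simpa only [neg_neg] using hneg.comp_neg_Iio, hφ⟩

theorem integral_of_conj_symm (hsymm : ∀ y, φ (-y) = conj (φ y)) (hφ : IntegrableOn φ (Ioi 0)) :
    ∫ y, φ y = (2 * (∫ y in Ioi 0, φ y).re : ℝ) := by
  have hIic : ∫ y in Iic 0, φ y = conj (∫ y in Ioi 0, φ y) := by
    rw [← neg_zero, ← integral_comp_neg_Ioi, neg_zero, ← integral_conj]
    simp_rw [hsymm]
  rw [← intervalIntegral.integral_Iic_add_Ioi (integrable_of_conj_symm hsymm hφ).integrableOn hφ,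
    hIic, add_comm, add_conj]

end ConjSymm

theorem neg_two_div_pi_mul_im_integral_Ioi {f : ℂ → ℂ} {a : ℝ} (ha : 0 < a)
    (hf : DiffContOnCl ℂ f {z | 0 < z.re})
    (hlim : Tendsto f (cobounded ℂ ⊓ 𝓟 {z | 0 ≤ z.re}) (𝓝 0))
    (hsymm : ∀ y : ℝ, f (-(y * I)) = conj (f (y * I)))
    (hint : IntegrableOn (fun u : ℝ ↦ u * f (u * I) / (u ^ 2 + a ^ 2)) (Ioi 0)) :
    (-(2 / Real.pi) * (∫ u in Ioi (0 : ℝ), u * f (u * I) / (u ^ 2 + a ^ 2)).im : ℝ) = f a := by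
  have ho : (fun z ↦ z * f z) =o[cobounded ℂ ⊓ 𝓟 {z | 0 ≤ z.re}] id :=
    ((isBigO_refl id _).mul_isLittleO ((isLittleO_one_iff ℂ).2 hlim)).congr_right mul_one
  have hkernel (y : ℝ) : cauchyPDFReal (a : ℂ).im (a : ℂ).re.toNNReal y • (y * I * f (y * I))
      = (Real.pi⁻¹ * a : ℝ) * I * (y * f (y * I) / (y ^ 2 + a ^ 2)) := by
    rw [cauchyPDFReal_def, ofReal_re, ofReal_im, Real.coe_toNNReal _ ha.le, sub_zero, real_smul]
    push_cast
    ring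
  have hconj (y : ℝ) :
      (Real.pi⁻¹ * a : ℝ) * I * ((-y : ℝ) * f ((-y : ℝ) * I) / ((-y : ℝ) ^ 2 + a ^ 2))
        = conj ((Real.pi⁻¹ * a : ℝ) * I * (y * f (y * I) / (y ^ 2 + a ^ 2))) := by
    simp only [ofReal_neg, neg_mul, hsymm, even_two, Even.neg_pow, map_mul, map_div₀, map_add,
      map_pow, conj_ofReal, conj_I]
    ring
  have poisson := integral_cauchyPDFReal_smul (w := a) (by simpa)
    (differentiable_id.diffContOnCl.smul hf) ho
  simp only [hkernel, id, smul_eq_mul] at poisson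
  specialize poisson (integrable_of_conj_symm hconj (hint.const_mul _))
  rw [integral_of_conj_symm hconj (hint.const_mul _), integral_const_mul] at poisson
  refine mul_left_cancel₀ (ofReal_ne_zero.2 ha.ne') (Eq.trans ?_ poisson)
  rw [← ofReal_mul, ofReal_inj, mul_assoc _ I, re_ofReal_mul, I_mul_re]
  ring

/-- The generalized Cauchy covariance `t ↦ (1 + |t| ^ α) ^ (-β)`, continued analytically from the
positive half-line to the right half-plane by the principal branches of the two powers. -/
noncomputable def generalizedCauchy (α β : ℝ) (z : ℂ) : ℂ :=
  (1 + z ^ (α : ℂ)) ^ (-(β : ℂ))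

section GeneralizedCauchy

variable {α β : ℝ} {z : ℂ}

theorem arg_cpow_ofReal (hz : z ≠ 0) (h : arg z * α ∈ Ioc (-Real.pi) Real.pi) :
    arg (z ^ (α : ℂ)) = arg z * α := by
  rw [cpow_ofReal, ofReal_cos, ofReal_sin,
    arg_mul_cos_add_sin_mul_I (Real.rpow_pos_of_pos (norm_pos_iff.2 hz) α) h]

theorem cpow_ofReal_mem_slitPlane (hz : z ≠ 0) (h : |arg z * α| < Real.pi) :
    z ^ (α : ℂ) ∈ slitPlane := by
  rw [abs_lt] at h
  rw [mem_slitPlane_iff_arg, arg_cpow_ofReal hz ⟨h.1, h.2.le⟩]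
  exact ⟨h.2.ne, by simp [cpow_eq_zero_iff, hz]⟩

theorem one_add_mem_slitPlane (hz : z ∈ slitPlane) : 1 + z ∈ slitPlane := by
  simp only [mem_slitPlane_iff, add_re, one_re, add_im, one_im, zero_add] at hz ⊢
  exact hz.imp_left fun h ↦ by positivity

theorem one_add_cpow_mem_slitPlane (hα : α ∈ Ioo 0 2) (hz : 0 ≤ z.re) :
    1 + z ^ (α : ℂ) ∈ slitPlane := by
  rcases eq_or_ne z 0 with rfl | hz₀
  · simp [hα.1.ne']
  refine one_add_mem_slitPlane (cpow_ofReal_mem_slitPlane hz₀ ?_)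
  calc |arg z * α| ≤ Real.pi / 2 * α := by
        rw [abs_mul, abs_of_pos hα.1]
        exact mul_le_mul_of_nonneg_right (abs_arg_le_pi_div_two_iff.2 hz) hα.1.le
    _ < Real.pi := by nlinarith [hα.2, Real.pi_pos]

theorem diffContOnCl_generalizedCauchy (hα : α ∈ Ioo 0 2) :
    DiffContOnCl ℂ (generalizedCauchy α β) {z | 0 < z.re} := by
  constructor
  · intro z hz
    exact (((differentiableAt_id.cpow_const (.inl hz)).const_add 1).cpow_const
      (one_add_cpow_mem_slitPlane hα hz.le)).differentiableWithinAt
  · rw [closure_setOfPred_lt_re]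
    intro z hz
    exact (((continuousAt_cpow_const_of_re_pos (.inl hz) (by simpa using hα.1)).const_add 1).cpow
      continuousAt_const (one_add_cpow_mem_slitPlane hα hz)).continuousWithinAt

theorem arg_ne_pi_of_re_nonneg (hz : 0 ≤ z.re) : arg z ≠ Real.pi := fun h ↦
  hz.not_gt (arg_eq_pi_iff.1 h).1

theorem generalizedCauchy_conj (hα : α ∈ Ioo 0 2) (hz : 0 ≤ z.re) :
    generalizedCauchy α β (conj z) = conj (generalizedCauchy α β z) := by
  have hpow : conj z ^ (α : ℂ) = conj (z ^ (α : ℂ)) := by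
    rw [conj_cpow _ _ (arg_ne_pi_of_re_nonneg hz), conj_ofReal]
  have hbase : conj (1 + z ^ (α : ℂ)) = 1 + conj (z ^ (α : ℂ)) := by simp
  rw [generalizedCauchy, generalizedCauchy, hpow, ← hbase,
    conj_cpow _ _ (slitPlane_arg_ne_pi (one_add_cpow_mem_slitPlane hα hz)), map_neg, conj_ofReal]

theorem generalizedCauchy_ofReal {t : ℝ} (ht : 0 ≤ t) :
    generalizedCauchy α β t = ((1 + t ^ α) ^ (-β) : ℝ) := by
  rw [generalizedCauchy, ofReal_cpow (by positivity)]
  push_cast [ofReal_cpow ht]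
  rfl

theorem generalizedCauchy_mul_I {u : ℝ} (hu : 0 < u) :
    generalizedCauchy α β (u * I)
      = (1 + exp (Real.pi * α / 2 * I) * (u : ℂ) ^ (α : ℂ)) ^ (-(β : ℂ)) := by
  have hu₀ : (u : ℂ) ≠ 0 := ofReal_ne_zero.2 hu.ne'
  have hpow : (u * I) ^ (α : ℂ) = exp (Real.pi * α / 2 * I) * (u : ℂ) ^ (α : ℂ) := by
    rw [cpow_def_of_ne_zero (mul_ne_zero hu₀ I_ne_zero), log_ofReal_mul hu I_ne_zero, log_I,
      cpow_def_of_ne_zero hu₀, ← exp_add, ofReal_log hu.le]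
    ring_nf
  rw [generalizedCauchy, hpow]

theorem isBigO_generalizedCauchy (hα : 0 < α) (hβ : 0 ≤ β) :
    generalizedCauchy α β =O[cobounded ℂ] fun z ↦ ‖z‖ ^ (-(α * β)) := by
  have hatTop : Tendsto (fun z : ℂ ↦ ‖z ^ (α : ℂ)‖) (cobounded ℂ) atTop := by
    simp_rw [norm_cpow_real]
    exact (tendsto_rpow_atTop hα).comp tendsto_norm_cobounded_atTop
  have hbase : (fun z : ℂ ↦ ‖z‖ ^ α) =O[cobounded ℂ] fun z ↦ ‖1 + z ^ (α : ℂ)‖ := by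
    simpa [norm_cpow_real] using
      ((isLittleO_one_left_iff ℂ).2 hatTop).right_isBigO_add.norm_norm
  have hinv : (fun z : ℂ ↦ ‖1 + z ^ (α : ℂ)‖⁻¹) =O[cobounded ℂ] fun z ↦ (‖z‖ ^ α)⁻¹ := by
    refine hbase.inv_rev ((eventually_ne_cobounded 0).mono fun z hz h ↦ ?_)
    exact absurd h (Real.rpow_pos_of_pos (norm_pos_iff.2 hz) α).ne'
  refine ((hinv.rpow hβ (.of_forall fun z ↦ by positivity)).congr (fun z ↦ ?_)
    fun z ↦ ?_).of_norm_left
  · rw [generalizedCauchy, ← ofReal_neg, norm_cpow_real, Real.inv_rpow (norm_nonneg _),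
      Real.rpow_neg (norm_nonneg _)]
  · rw [← Real.rpow_neg (norm_nonneg _), ← Real.rpow_mul (norm_nonneg _), neg_mul]

theorem tendsto_generalizedCauchy (hα : 0 < α) (hβ : 0 < β) :
    Tendsto (generalizedCauchy α β) (cobounded ℂ) (𝓝 0) :=
  (isBigO_generalizedCauchy hα hβ.le).trans_tendsto
    ((tendsto_rpow_neg_atTop (mul_pos hα hβ)).comp tendsto_norm_cobounded_atTop)

theorem continuous_generalizedCauchy_mul_I (hα : α ∈ Ioo 0 2) :
    Continuous fun u : ℝ ↦ generalizedCauchy α β (u * I) :=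
  (diffContOnCl_generalizedCauchy hα).continuousOn.comp_continuous (by fun_prop) fun u ↦ by
    rw [closure_setOfPred_lt_re]
    simp

theorem isBigO_mul_generalizedCauchy_div (hα : 0 < α) (hβ : 0 ≤ β) (a : ℝ) :
    (fun u : ℝ ↦ u * generalizedCauchy α β (u * I) / (u ^ 2 + a ^ 2))
      =O[atTop] fun u ↦ u ^ (-(α * β) - 1) := by
  have htop : Tendsto (fun u : ℝ ↦ (u : ℂ) * I) atTop (cobounded ℂ) := by
    rw [← tendsto_norm_atTop_iff_cobounded]
    simpa using tendsto_abs_atTop_atTop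
  have hf := (isBigO_generalizedCauchy hα hβ).comp_tendsto htop
  have hquot : (fun u : ℝ ↦ (u : ℂ) / (u ^ 2 + a ^ 2)) =O[atTop] fun u : ℝ ↦ u⁻¹ := by
    refine .of_bound 1 ((eventually_gt_atTop 0).mono fun u hu ↦ ?_)
    rw [← ofReal_pow, ← ofReal_pow, ← ofReal_add, ← ofReal_div, norm_real, one_mul,
      Real.norm_of_nonneg (by positivity), Real.norm_of_nonneg (by positivity), ← one_div,
      div_le_div_iff₀ (by positivity) hu]
    nlinarith [sq_nonneg a]
  refine (hquot.mul hf).congr' (.of_forall fun u ↦ ?_) ((eventually_gt_atTop 0).mono fun u hu ↦ ?_)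
  · exact div_mul_eq_mul_div _ _ _
  · simp [Real.rpow_sub_one hu.ne', abs_of_pos hu, div_eq_inv_mul]

theorem integrableOn_mul_generalizedCauchy_div {a : ℝ} (hα : α ∈ Ioo 0 2) (hβ : 0 < β)
    (ha : a ≠ 0) :
    IntegrableOn (fun u : ℝ ↦ u * generalizedCauchy α β (u * I) / (u ^ 2 + a ^ 2)) (Ioi 0) := by
  have hcont : Continuous
      fun u : ℝ ↦ u * generalizedCauchy α β (u * I) / ((u : ℂ) ^ 2 + (a : ℂ) ^ 2) := by
    refine (continuous_ofReal.mul (continuous_generalizedCauchy_mul_I hα)).div (by fun_prop)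
      fun u ↦ ?_
    exact_mod_cast (by positivity : u ^ 2 + a ^ 2 ≠ 0)
  refine ((hcont.locallyIntegrable.locallyIntegrableOn _).integrableOn_of_isBigO_atTop
    (isBigO_mul_generalizedCauchy_div hα.1 hβ.le a) ?_).mono_set Ioi_subset_Ici_self
  rw [integrableAtFilter_rpow_atTop_iff]
  linarith [mul_pos hα.1 hβ]

end GeneralizedCauchy

/-- Residue identity recovering the generalized Cauchy covariance from the claimed spectral
density: for `α ∈ (0,2)`, `β > 0` and `a > 0`,
`−(2/π) Im ∫₀^∞ u(1 + e^{iπα/2}u^α)^{−β}(u² + a²)^{−1} du = (1 + a^α)^{−β}`. -/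
theorem gfgcc_spectral_residue_identity (α β a : ℝ)
    (hα : α ∈ Set.Ioo (0 : ℝ) 2) (hβ : 0 < β) (ha : 0 < a) :
    -(2 / Real.pi) * (∫ u in Set.Ioi (0 : ℝ),
        (u : ℂ) * (1 + Complex.exp ((Real.pi : ℂ) * (α : ℂ) / 2 * Complex.I)
            * (u : ℂ) ^ (α : ℂ)) ^ (-(β : ℂ)) / ((u : ℂ) ^ 2 + (a : ℂ) ^ 2)).im
      = (1 + a ^ α) ^ (-β) := by
  have hsymm (y : ℝ) :
      generalizedCauchy α β (-(y * I)) = conj (generalizedCauchy α β (y * I)) := by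
    rw [← generalizedCauchy_conj hα (by simp), map_mul, conj_ofReal, conj_I, mul_neg]
  have residue := neg_two_div_pi_mul_im_integral_Ioi ha (diffContOnCl_generalizedCauchy hα)
    ((tendsto_generalizedCauchy hα.1 hβ).mono_left inf_le_left) hsymm
    (integrableOn_mul_generalizedCauchy_div hα hβ ha.ne')
  rw [generalizedCauchy_ofReal ha.le, ofReal_inj] at residue
  rw [← residue]
  congr 2
  refine setIntegral_congr_fun measurableSet_Ioi fun u hu ↦ ?_
  simp only [generalizedCauchy_mul_I hu]
end

section
/- Let α ∈ (0,2) and β > 0, and define S_{α,β}(ω) = −(1/π) Im ∫₀^∞ e^{−ωu} (1 + e^{iπα/2} u^α)^{−β} du for ω > 0 (principal branch of the complex power). Then lim_{ω→∞} ω^{α+1} S_{α,β}(ω) = (β/π) Γ(α+1) sin(πα/2). That is, the spectral density of the one-dimensional GFGCC satisfies S_{α,β}(ω) ~ (β/π) Γ(α+1) sin(πα/2) ω^{−α−1} as ω → ∞. -/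
open Filter

/-- Spectral density of the one-dimensional GFGCC (Laplace-type representation),
`S_{α,β}(ω) = −(1/π) Im ∫₀^∞ e^{−ωu}(1 + e^{iπα/2}u^α)^{−β} du` (principal branch). -/
noncomputable def gfgccSpectralDensity (α β ω : ℝ) : ℝ :=
  -(1 / Real.pi) * (∫ u in Set.Ioi (0 : ℝ),
      Complex.exp (-(ω * u : ℝ)) *
        (1 + Complex.exp ((Real.pi : ℂ) * (α : ℂ) / 2 * Complex.I) * (u : ℂ) ^ (α : ℂ))
          ^ (-(β : ℂ))).im

/-!
Substituting `v = ωu` in `∫₀^∞ e^{-ωu} f(u) du` shows that the behaviour as `ω → ∞` is governed by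
`f` near `0`: if `f(u) ~ a u^α`, the integral is `~ a Γ(α + 1) ω^{-α-1}` (Watson's lemma).
For `f(u) = (1 + c u^α)^s - 1` one has `a = s c`, and the subtracted `1` contributes `1 / ω`, which
is real and so disappears from the imaginary part. The spectral density is the case
`c = e^{iπα/2}`, `s = -β`, where `Im c = sin(πα/2)`.
-/

open Asymptotics MeasureTheory Set Topology

section LaplaceTransform

variable {E : Type*} [NormedAddCommGroup E] [NormedSpace ℝ E] {f g : ℝ → E} {a : E}
  {α b C δ ω : ℝ}

/-- Absolute convergence of the Laplace integral of `f` at the real point `ω`; values of `f` outside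
`(0, ∞)` are irrelevant. -/
def LaplaceConvergent (f : ℝ → E) (ω : ℝ) : Prop :=
  IntegrableOn (fun u ↦ Real.exp (-(ω * u)) • f u) (Ioi 0)

/-- The one-sided Laplace transform of `f` at the real point `ω`, with value `0` where the integral
does not converge absolutely. -/
noncomputable def laplaceTransform (f : ℝ → E) (ω : ℝ) : E :=
  ∫ u in Ioi 0, Real.exp (-(ω * u)) • f u

theorem LaplaceConvergent.aestronglyMeasurable (hf : LaplaceConvergent f ω) :
    AEStronglyMeasurable f (volume.restrict (Ioi 0)) := by
  have hexp : Continuous fun u ↦ Real.exp (ω * u) := by fun_prop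
  refine (hexp.aestronglyMeasurable.smul hf.1).congr (ae_of_all _ fun u ↦ ?_)
  simp [smul_smul, ← Real.exp_add]

theorem LaplaceConvergent.of_le (hf : LaplaceConvergent f b) (hb : b ≤ ω) :
    LaplaceConvergent f ω := by
  have hexp : Continuous fun u ↦ Real.exp (-(ω * u)) := by fun_prop
  refine Integrable.mono hf (hexp.aestronglyMeasurable.smul hf.aestronglyMeasurable) ?_
  refine ae_restrict_of_forall_mem measurableSet_Ioi fun u (hu : 0 < u) ↦ ?_
  simp only [norm_smul, Real.norm_eq_abs, Real.abs_exp]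
  gcongr

theorem LaplaceConvergent.sub (hf : LaplaceConvergent f ω) (hg : LaplaceConvergent g ω) :
    LaplaceConvergent (fun u ↦ f u - g u) ω := by
  simpa only [LaplaceConvergent, smul_sub] using! Integrable.sub hf hg

theorem laplaceTransform_sub (hf : LaplaceConvergent f ω) (hg : LaplaceConvergent g ω) :
    laplaceTransform (fun u ↦ f u - g u) ω = laplaceTransform f ω - laplaceTransform g ω := by
  simpa only [laplaceTransform, smul_sub] using integral_sub hf hg

theorem LaplaceConvergent.indicator (hf : LaplaceConvergent f ω) {s : Set ℝ}
    (hs : MeasurableSet s) : LaplaceConvergent (s.indicator f) ω := by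
  simpa only [LaplaceConvergent, indicator_smul] using! Integrable.indicator hf hs

theorem laplaceConvergent_of_isBigO_exp (hb : b < ω) (hf : ContinuousOn f (Ici 0))
    (hO : f =O[atTop] fun u ↦ Real.exp (b * u)) : LaplaceConvergent f ω := by
  have hcont : ContinuousOn (fun u ↦ Real.exp (-(ω * u)) • f u) (Ici 0) :=
    ContinuousOn.smul (by fun_prop) hf
  have hdecay : (fun u ↦ Real.exp (-(ω * u)) • f u) =O[atTop] fun u ↦ Real.exp (-(ω - b) * u) := by
    refine ((isBigO_refl (fun u ↦ Real.exp (-(ω * u))) atTop).smul hO).congr_right fun u ↦ ?_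
    rw [smul_eq_mul, ← Real.exp_add]
    ring_nf
  have hexp : IntegrableAtFilter (fun u ↦ Real.exp (-(ω - b) * u)) atTop :=
    ⟨Ioi 0, Ioi_mem_atTop 0, exp_neg_integrableOn_Ioi 0 (sub_pos.2 hb)⟩
  exact ((hcont.locallyIntegrableOn measurableSet_Ici).integrableOn_of_isBigO_atTop
    hdecay hexp).mono_set Ioi_subset_Ici_self

theorem laplaceConvergent_const (hω : 0 < ω) (a : E) : LaplaceConvergent (fun _ ↦ a) ω :=
  laplaceConvergent_of_isBigO_exp hω continuousOn_const
    (by simpa using isBigO_const_const a (one_ne_zero (α := ℝ)) atTop)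

theorem laplaceTransform_const [CompleteSpace E] (hω : 0 < ω) (a : E) :
    laplaceTransform (fun _ ↦ a) ω = ω⁻¹ • a := by
  rw [laplaceTransform, integral_smul_const]
  simp only [← neg_mul, integral_exp_mul_Ioi (neg_neg_of_pos hω), mul_zero, Real.exp_zero,
    neg_div_neg_eq, one_div]

theorem laplaceConvergent_comp_div_iff (hω : 0 < ω) :
    LaplaceConvergent (fun v ↦ f (v / ω)) 1 ↔ LaplaceConvergent f ω := by
  have h := integrableOn_Ioi_comp_mul_left_iff (fun v ↦ Real.exp (-v) • f (v / ω)) 0 hω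
  simpa [LaplaceConvergent, hω.ne'] using h.symm

theorem laplaceTransform_comp_div (hω : 0 < ω) :
    laplaceTransform (fun v ↦ f (v / ω)) 1 = ω • laplaceTransform f ω := by
  have h := integral_comp_mul_left_Ioi' (fun v ↦ Real.exp (-v) • f (v / ω)) 0 hω
  simpa [laplaceTransform, hω.ne'] using h.symm

theorem laplaceTransform_rpow_smul_one [CompleteSpace E] (hα : -1 < α) (a : E) :
    laplaceTransform (fun v ↦ v ^ α • a) 1 = Real.Gamma (α + 1) • a := by
  simp only [laplaceTransform, one_mul, smul_smul]
  rw [integral_smul_const, Real.Gamma_eq_integral (by linarith), add_sub_cancel_right]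

theorem norm_laplaceTransform_indicator_Ioi_le (hf : LaplaceConvergent f b) (hb : b ≤ ω) :
    ‖laplaceTransform ((Ioi δ).indicator f) ω‖ ≤
      Real.exp (-((ω - b) * δ)) * ∫ u in Ioi 0, ‖Real.exp (-(b * u)) • f u‖ := by
  rw [← integral_const_mul]
  refine norm_integral_le_of_norm_le (hf.norm.const_mul _) (ae_of_all _ fun u ↦ ?_)
  by_cases hu : δ < u
  · rw [indicator_of_mem (mem_Ioi.2 hu), norm_smul, norm_smul, Real.norm_eq_abs, Real.norm_eq_abs,
      Real.abs_exp, Real.abs_exp, ← mul_assoc, ← Real.exp_add]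
    gcongr
    nlinarith
  · rw [indicator_of_notMem (by simpa using hu), smul_zero, norm_zero]
    positivity

theorem tendsto_rpow_smul_laplaceTransform_indicator_Ioi (hf : LaplaceConvergent f b) (hδ : 0 < δ)
    (p : ℝ) :
    Tendsto (fun ω : ℝ ↦ ω ^ p • laplaceTransform ((Ioi δ).indicator f) ω) atTop (𝓝 0) := by
  set M := ∫ u in Ioi 0, ‖Real.exp (-(b * u)) • f u‖
  have hdecay : Tendsto (fun ω : ℝ ↦ ω ^ p * Real.exp (-δ * ω) * (Real.exp (b * δ) * M)) atTop
      (𝓝 0) := by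
    simpa using (tendsto_rpow_mul_exp_neg_mul_atTop_nhds_zero p δ hδ).mul_const _
  refine squeeze_zero_norm' ?_ hdecay
  filter_upwards [eventually_ge_atTop b, eventually_ge_atTop 0] with ω hb hω
  calc ‖ω ^ p • laplaceTransform ((Ioi δ).indicator f) ω‖
      ≤ ω ^ p * (Real.exp (-((ω - b) * δ)) * M) := by
        rw [norm_smul, Real.norm_of_nonneg (by positivity)]
        gcongr
        exact norm_laplaceTransform_indicator_Ioi_le hf hb
    _ = ω ^ p * Real.exp (-δ * ω) * (Real.exp (b * δ) * M) := by
        rw [show -((ω - b) * δ) = -δ * ω + b * δ by ring, Real.exp_add]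
        ring

theorem rpow_mul_div_rpow_neg {v : ℝ} (hv : 0 < v) (hω : 0 < ω) (α : ℝ) :
    v ^ α * (v / ω) ^ (-α) = ω ^ α := by
  rw [Real.div_rpow hv.le hω.le, Real.rpow_neg hv.le, Real.rpow_neg hω.le]
  field_simp

theorem tendsto_rpow_smul_laplaceTransform_of_norm_le [CompleteSpace E] (hα : -1 < α)
    (hf : LaplaceConvergent f b) (hC : ∀ u, 0 < u → ‖u ^ (-α) • f u‖ ≤ C)
    (ha : Tendsto (fun u ↦ u ^ (-α) • f u) (𝓝[>] 0) (𝓝 a)) :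
    Tendsto (fun ω ↦ ω ^ (α + 1) • laplaceTransform f ω) atTop (𝓝 (Real.Gamma (α + 1) • a)) := by
  have hscale {ω v : ℝ} (hω : 0 < ω) (hv : 0 < v) :
      ω ^ α • f (v / ω) = v ^ α • (v / ω) ^ (-α) • f (v / ω) := by
    rw [smul_smul, rpow_mul_div_rpow_neg hv hω]
  have hlim : Tendsto (fun ω : ℝ ↦ laplaceTransform (fun v ↦ ω ^ α • f (v / ω)) 1) atTop
      (𝓝 (laplaceTransform (fun v ↦ v ^ α • a) 1)) := by
    have hΓ := Real.GammaIntegral_convergent (s := α + 1) (by linarith)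
    rw [add_sub_cancel_right] at hΓ
    refine tendsto_integral_filter_of_dominated_convergence _ ?_ ?_ (hΓ.mul_const C) ?_
    · filter_upwards [eventually_gt_atTop 0, eventually_ge_atTop b] with ω hω hb
      have hconv := (laplaceConvergent_comp_div_iff hω).2 (hf.of_le hb)
      exact (hconv.1.const_smul (ω ^ α)).congr (ae_of_all _ fun v ↦ smul_comm _ _ _)
    · filter_upwards [eventually_gt_atTop 0] with ω hω
      refine ae_restrict_of_forall_mem measurableSet_Ioi fun v (hv : 0 < v) ↦ ?_
      rw [hscale hω hv, norm_smul, norm_smul, one_mul, Real.norm_eq_abs, Real.abs_exp,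
        Real.norm_of_nonneg (by positivity), ← mul_assoc]
      gcongr
      exact hC _ (by positivity)
    · refine ae_restrict_of_forall_mem measurableSet_Ioi fun v (hv : 0 < v) ↦ ?_
      have hdiv : Tendsto (fun ω : ℝ ↦ v / ω) atTop (𝓝[>] 0) :=
        tendsto_nhdsWithin_iff.2 ⟨tendsto_id.const_div_atTop v,
          (eventually_gt_atTop 0).mono fun ω hω ↦ div_pos hv hω⟩
      refine (((ha.comp hdiv).const_smul (v ^ α)).congr' ?_).const_smul _
      filter_upwards [eventually_gt_atTop 0] with ω hω using (hscale hω hv).symm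
  rw [laplaceTransform_rpow_smul_one hα] at hlim
  refine hlim.congr' ?_
  filter_upwards [eventually_gt_atTop 0] with ω hω
  rw [Real.rpow_add_one hω.ne', mul_smul, ← laplaceTransform_comp_div hω]
  simp only [laplaceTransform, smul_comm _ (ω ^ α), integral_smul]

/-- **Watson's lemma**, leading order. -/
theorem tendsto_rpow_smul_laplaceTransform [CompleteSpace E] (hα : -1 < α)
    (hf : LaplaceConvergent f b) (ha : Tendsto (fun u ↦ u ^ (-α) • f u) (𝓝[>] 0) (𝓝 a)) :
    Tendsto (fun ω ↦ ω ^ (α + 1) • laplaceTransform f ω) atTop (𝓝 (Real.Gamma (α + 1) • a)) := by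
  obtain ⟨δ, hδ : 0 < δ, hbound⟩ := mem_nhdsGT_iff_exists_Ioc_subset.1
    (ha.norm.eventually_lt_const (lt_add_one ‖a‖))
  set tail := (Ioi δ).indicator f
  have htail : LaplaceConvergent tail b := hf.indicator measurableSet_Ioi
  have hhead_eq : ∀ u ≤ δ, f u - tail u = f u := fun u hu ↦ by simp [tail, hu]
  have hhead : Tendsto (fun ω ↦ ω ^ (α + 1) • laplaceTransform (fun u ↦ f u - tail u) ω) atTop
      (𝓝 (Real.Gamma (α + 1) • a)) := by
    refine tendsto_rpow_smul_laplaceTransform_of_norm_le (C := ‖a‖ + 1) hα (hf.sub htail)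
      (fun u hu ↦ ?_) (ha.congr' ?_)
    · rcases le_or_gt u δ with huδ | hδu
      · rw [hhead_eq u huδ]
        exact (hbound ⟨hu, huδ⟩).le
      · simp only [tail, indicator_of_mem (mem_Ioi.2 hδu), sub_self, smul_zero, norm_zero]
        positivity
    · filter_upwards [Ioc_mem_nhdsGT hδ] with u hu
      rw [hhead_eq u hu.2]
  have hsum := hhead.add (tendsto_rpow_smul_laplaceTransform_indicator_Ioi hf hδ (α + 1))
  rw [add_zero] at hsum
  refine hsum.congr' ?_
  filter_upwards [eventually_ge_atTop b] with ω hb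
  rw [laplaceTransform_sub (hf.of_le hb) (htail.of_le hb), ← smul_add, sub_add_cancel]

end LaplaceTransform

theorem tendsto_rpow_neg_smul_comp_rpow_sub {E : Type*} [NormedAddCommGroup E] [NormedSpace ℝ E]
    {F : ℝ → E} {a : E} {α : ℝ} (hα : 0 < α) (hF : HasDerivAt F a 0) :
    Tendsto (fun u ↦ u ^ (-α) • (F (u ^ α) - F 0)) (𝓝[>] 0) (𝓝 a) := by
  have hpow : Tendsto (fun u : ℝ ↦ u ^ α) (𝓝[>] 0) (𝓝[≠] 0) := by
    refine tendsto_nhdsWithin_iff.2 ⟨?_, ?_⟩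
    · exact tendsto_nhdsWithin_of_tendsto_nhds <| by
        simpa [hα.ne'] using (Real.continuousAt_rpow_const 0 α (.inr hα.le)).tendsto
    · filter_upwards [self_mem_nhdsWithin] with u hu using (Real.rpow_pos_of_pos hu α).ne'
  refine ((hasDerivAt_iff_tendsto_slope.1 hF).comp hpow).congr' ?_
  filter_upwards [self_mem_nhdsWithin] with u (hu : 0 < u)
  rw [Function.comp_apply, slope_def_module, sub_zero, Real.rpow_neg hu.le]

section OneAddMulRpowCpow

variable {α b ω : ℝ} {c : ℂ}

theorem one_add_mul_ofReal_mem_slitPlane (hc : c ∈ Complex.slitPlane) {x : ℝ} (hx : 0 ≤ x) :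
    1 + c * x ∈ Complex.slitPlane := by
  rcases hx.eq_or_lt with rfl | hx
  · simp
  rcases Complex.mem_slitPlane_iff.1 hc with hre | him
  · left
    simpa using add_pos one_pos (mul_pos hre hx)
  · right
    simpa using ⟨him, hx.ne'⟩

theorem hasDerivAt_one_add_mul_ofReal_cpow (c s : ℂ) :
    HasDerivAt (fun x : ℝ ↦ (1 + c * x) ^ s) (s * c) 0 := by
  have hlin : HasDerivAt (fun z : ℂ ↦ 1 + c * z) c ((0 : ℝ) : ℂ) := by
    simpa using ((hasDerivAt_id ((0 : ℝ) : ℂ)).const_mul c).const_add 1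
  simpa using (hlin.cpow_const (c := s) (by simp)).comp_ofReal

theorem continuousOn_one_add_mul_rpow_cpow (hα : 0 ≤ α) (hc : c ∈ Complex.slitPlane) (s : ℂ) :
    ContinuousOn (fun u : ℝ ↦ (1 + c * (u ^ α : ℝ)) ^ s) (Ici 0) := by
  have hpow := Complex.continuous_ofReal.comp (Real.continuous_rpow_const hα)
  exact ((hpow.const_mul c).const_add 1).continuousOn.cpow_const fun u hu ↦
    one_add_mul_ofReal_mem_slitPlane hc (Real.rpow_nonneg hu α)

theorem isTheta_one_add_mul_rpow (hα : 0 < α) (hc : c ≠ 0) :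
    (fun u : ℝ ↦ 1 + c * (u ^ α : ℝ)) =Θ[atTop] fun u ↦ u ^ α := by
  have hlin : (fun u : ℝ ↦ c * (u ^ α : ℝ)) =Θ[atTop] fun u ↦ u ^ α :=
    (IsTheta.of_norm_eventuallyEq_norm (.of_eq (by ext; simp))).const_mul_left hc
  have hone : (fun _ : ℝ ↦ (1 : ℂ)) =o[atTop] fun u : ℝ ↦ u ^ α :=
    isLittleO_const_left.2 (.inr (tendsto_norm_atTop_atTop.comp (tendsto_rpow_atTop hα)))
  simpa only [Pi.add_def, add_comm] using hlin.add_isLittleO hone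

theorem isBigO_one_add_mul_rpow_cpow_exp (hα : 0 < α) (hc : c ≠ 0) (s : ℂ) (hb : 0 < b) :
    (fun u : ℝ ↦ (1 + c * (u ^ α : ℝ)) ^ s) =O[atTop] fun u ↦ Real.exp (b * u) := by
  have hΘ := isTheta_one_add_mul_rpow hα hc
  have hne : ∀ᶠ u : ℝ in atTop, 1 + c * (u ^ α : ℝ) ≠ 0 := by
    filter_upwards [hΘ.eq_zero_iff, eventually_gt_atTop 0] with u hiff hu
    exact hiff.not.2 (Real.rpow_pos_of_pos hu α).ne'
  have hcpow : (fun u : ℝ ↦ (1 + c * (u ^ α : ℝ)) ^ s) =Θ[atTop]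
      fun u ↦ ‖1 + c * (u ^ α : ℝ)‖ ^ s.re :=
    Complex.isTheta_cpow_const_rpow fun _ _ ↦ hne
  have hnorm : (fun u : ℝ ↦ ‖1 + c * (u ^ α : ℝ)‖ ^ s.re) =Θ[atTop] fun u ↦ (u ^ α) ^ s.re :=
    hΘ.norm_left.rpow (.of_forall fun _ ↦ norm_nonneg _)
      ((eventually_ge_atTop 0).mono fun u hu ↦ Real.rpow_nonneg hu α)
  have hexp : (fun u : ℝ ↦ (u ^ α) ^ s.re) =o[atTop] fun u ↦ Real.exp (b * u) :=
    (isLittleO_rpow_exp_pos_mul_atTop (α * s.re) hb).congr'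
      ((eventually_ge_atTop 0).mono fun u hu ↦ Real.rpow_mul hu α s.re) .rfl
  exact (hcpow.trans hnorm).1.trans hexp.isBigO

theorem laplaceConvergent_one_add_mul_rpow_cpow (hα : 0 < α) (hc : c ∈ Complex.slitPlane) (s : ℂ)
    (hω : 0 < ω) : LaplaceConvergent (fun u ↦ (1 + c * (u ^ α : ℝ)) ^ s) ω :=
  laplaceConvergent_of_isBigO_exp (half_lt_self hω)
    (continuousOn_one_add_mul_rpow_cpow hα.le hc s)
    (isBigO_one_add_mul_rpow_cpow_exp hα (Complex.slitPlane_ne_zero hc) s (half_pos hω))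

theorem tendsto_rpow_smul_laplaceTransform_one_add_mul_rpow_cpow_sub_inv (hα : 0 < α)
    (hc : c ∈ Complex.slitPlane) (s : ℂ) :
    Tendsto
      (fun ω : ℝ ↦ ω ^ (α + 1) •
        (laplaceTransform (fun u ↦ (1 + c * (u ^ α : ℝ)) ^ s) ω - (ω : ℂ)⁻¹))
      atTop (𝓝 (Real.Gamma (α + 1) • (s * c))) := by
  have hconv {ω : ℝ} (hω : 0 < ω) := laplaceConvergent_one_add_mul_rpow_cpow hα hc s hω
  have hlead : Tendsto (fun u : ℝ ↦ u ^ (-α) • ((1 + c * (u ^ α : ℝ)) ^ s - 1)) (𝓝[>] 0)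
      (𝓝 (s * c)) := by
    simpa using tendsto_rpow_neg_smul_comp_rpow_sub hα (hasDerivAt_one_add_mul_ofReal_cpow c s)
  refine (tendsto_rpow_smul_laplaceTransform (by linarith)
    ((hconv one_pos).sub (laplaceConvergent_const one_pos 1)) hlead).congr' ?_
  filter_upwards [eventually_gt_atTop 0] with ω hω
  rw [laplaceTransform_sub (hconv hω) (laplaceConvergent_const hω 1), laplaceTransform_const hω 1]
  simp

end OneAddMulRpowCpow

theorem exp_ofReal_mul_I_mem_slitPlane_iff {θ : ℝ} :
    Complex.exp (θ * Complex.I) ∈ Complex.slitPlane ↔ Real.cos θ ≠ -1 := by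
  rw [Complex.mem_slitPlane_iff, Complex.exp_ofReal_mul_I_re, Complex.exp_ofReal_mul_I_im]
  refine ⟨?_, fun h ↦ ?_⟩
  · rintro (hcos | hsin) h
    · linarith
    · exact hsin (Real.sin_eq_zero_iff_cos_eq.2 (.inr h))
  · refine or_iff_not_imp_right.2 fun hsin ↦ ?_
    rw [(Real.sin_eq_zero_iff_cos_eq.1 (not_not.1 hsin)).resolve_right h]
    exact one_pos

theorem gfgccSpectralDensity_eq_laplaceTransform (α β ω : ℝ) :
    gfgccSpectralDensity α β ω = -(1 / Real.pi) * (laplaceTransform (fun u ↦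
      (1 + Complex.exp ((Real.pi * α / 2 : ℝ) * Complex.I) * (u ^ α : ℝ)) ^ (-(β : ℂ))) ω).im := by
  unfold gfgccSpectralDensity laplaceTransform
  congr 2
  refine setIntegral_congr_fun measurableSet_Ioi fun u (hu : 0 < u) ↦ ?_
  simp only [Complex.real_smul, Complex.ofReal_exp, Complex.ofReal_cpow hu.le]
  push_cast
  rfl

theorem gfgcc_spectral_high_frequency_general {α : ℝ} (hα : 0 < α)
    (hcos : Real.cos (Real.pi * α / 2) ≠ -1) (β : ℝ) :
    Tendsto (fun ω : ℝ ↦ ω ^ (α + 1) * gfgccSpectralDensity α β ω) atTop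
      (𝓝 (β / Real.pi * Real.Gamma (α + 1) * Real.sin (Real.pi * α / 2))) := by
  have hlim := (Complex.continuous_im.tendsto _).comp
    (tendsto_rpow_smul_laplaceTransform_one_add_mul_rpow_cpow_sub_inv hα
      (exp_ofReal_mul_I_mem_slitPlane_iff.2 hcos) (-β))
  have hval : -(1 / Real.pi) * (Real.Gamma (α + 1) •
      (-(β : ℂ) * Complex.exp ((Real.pi * α / 2 : ℝ) * Complex.I))).im =
      β / Real.pi * Real.Gamma (α + 1) * Real.sin (Real.pi * α / 2) := by
    rw [← Complex.ofReal_neg, Complex.smul_im, Complex.im_ofReal_mul, Complex.exp_ofReal_mul_I_im,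
      smul_eq_mul]
    ring
  rw [← hval]
  refine (hlim.const_mul _).congr fun ω ↦ ?_
  rw [gfgccSpectralDensity_eq_laplaceTransform, Function.comp_apply, Complex.smul_im,
    Complex.sub_im, ← Complex.ofReal_inv, Complex.ofReal_im, sub_zero, smul_eq_mul]
  ring

/-- High-frequency behavior of the spectral density of the one-dimensional GFGCC:
for `α ∈ (0,2)`, `β > 0`, `lim_{ω→∞} ω^{α+1} S_{α,β}(ω) = (β/π) Γ(α+1) sin(πα/2)`,
i.e. `S_{α,β}(ω) ~ (β/π)Γ(α+1) sin(πα/2) ω^{−α−1}` as `ω → ∞`. -/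
theorem gfgcc_spectral_high_frequency (α β : ℝ)
    (hα : α ∈ Set.Ioo (0 : ℝ) 2) (hβ : 0 < β) :
    Tendsto (fun ω : ℝ => ω ^ (α + 1) * gfgccSpectralDensity α β ω) atTop
      (nhds (β / Real.pi * Real.Gamma (α + 1) * Real.sin (Real.pi * α / 2))) := by
  have hlt : Real.cos Real.pi < Real.cos (Real.pi * α / 2) := by
    apply Real.cos_lt_cos_of_nonneg_of_le_pi <;> nlinarith [Real.pi_pos, hα.1, hα.2]
  exact gfgcc_spectral_high_frequency_general hα.1 (Real.cos_pi ▸ hlt.ne') β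
end

section
/- Let α ∈ (0,2) and β > 0 with αβ < 1, and define S_{α,β}(ω) = −(1/π) Im ∫₀^∞ e^{−ωu} (1 + e^{iπα/2} u^α)^{−β} du for ω > 0 (principal branch). Then lim_{ω→0⁺} ω^{1−αβ} S_{α,β}(ω) = (1/π) Γ(1−αβ) sin(παβ/2). That is, the spectral density of the one-dimensional GFGCC diverges at the origin like (Γ(1−αβ) sin(παβ/2)/π) ω^{αβ−1}, consistent with long range dependence. -/
open Filter

/-!
Writing `c = e^{iπα/2}`, pull the homogeneous part out of the integrand:
`(1 + c u^α)^{−β} = u^{−αβ} (u^{−α} + c)^{−β}`, where the second factor is bounded on `(0, ∞)` and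
tends to `c^{−β}` at infinity. An Abelian theorem for the Laplace transform (rescale `u = v / ω`
and apply dominated convergence) then gives
`ω^{1−αβ} ∫₀^∞ e^{−ωu} (1 + c u^α)^{−β} du → Γ(1−αβ) c^{−β}` as `ω → 0⁺`, where
`c^{−β} = e^{−iπαβ/2}`; it remains to take imaginary parts and multiply by `−1/π`.
-/

section Abelian

open MeasureTheory Set
open scoped Topology

lemma aestronglyMeasurable_comp_mul_left_Ioi {X : Type*} [TopologicalSpace X] {g : ℝ → X}
    (hg : AEStronglyMeasurable g (volume.restrict (Ioi 0))) {a : ℝ} (ha : 0 < a) :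
    AEStronglyMeasurable (fun v ↦ g (a * v)) (volume.restrict (Ioi 0)) :=
  hg.comp_quasiMeasurePreserving <|
    (Measure.quasiMeasurePreserving_smul volume ha.ne').restrict fun _ hv ↦ mul_pos ha hv

variable {E : Type*} [NormedAddCommGroup E] [NormedSpace ℝ E]

lemma rpow_smul_setIntegral_exp_neg_mul_rpow_smul (g : ℝ → E) (s : ℝ) {ω : ℝ} (hω : 0 < ω) :
    ω ^ s • ∫ u in Ioi 0, (Real.exp (-(ω * u)) * u ^ (s - 1)) • g u =
      ∫ v in Ioi 0, (Real.exp (-v) * v ^ (s - 1)) • g (ω⁻¹ * v) := by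
  have scaled_kernel : ∀ u ∈ Ioi (0 : ℝ),
      (Real.exp (-(ω * u)) * (ω * u) ^ (s - 1)) • g (ω⁻¹ * (ω * u)) =
        ω ^ (s - 1) • (Real.exp (-(ω * u)) * u ^ (s - 1)) • g u := by
    intro u hu
    rw [inv_mul_cancel_left₀ hω.ne', Real.mul_rpow hω.le (mem_Ioi.1 hu).le, smul_smul]
    ring_nf
  have change_of_variables := integral_comp_mul_left_Ioi
    (fun v ↦ (Real.exp (-v) * v ^ (s - 1)) • g (ω⁻¹ * v)) 0 hω
  rw [setIntegral_congr_fun measurableSet_Ioi scaled_kernel, integral_smul, mul_zero,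
    eq_inv_smul_iff₀ hω.ne', smul_smul] at change_of_variables
  rw [← change_of_variables, Real.rpow_sub_one hω.ne', mul_div_cancel₀ _ hω.ne']

theorem tendsto_rpow_smul_setIntegral_exp_neg_mul_rpow_smul [CompleteSpace E] {g : ℝ → E}
    {A : E} {s C : ℝ} (hs : 0 < s) (hg : AEStronglyMeasurable g (volume.restrict (Ioi 0)))
    (g_bound : ∀ u, 0 < u → ‖g u‖ ≤ C) (g_lim : Tendsto g atTop (𝓝 A)) :
    Tendsto (fun ω : ℝ ↦ ω ^ s • ∫ u in Ioi 0, (Real.exp (-(ω * u)) * u ^ (s - 1)) • g u)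
      (𝓝[>] 0) (𝓝 (Real.Gamma s • A)) := by
  have kernel_integrable := Real.GammaIntegral_convergent hs
  suffices Tendsto (fun ω : ℝ ↦ ∫ v in Ioi 0, (Real.exp (-v) * v ^ (s - 1)) • g (ω⁻¹ * v))
      (𝓝[>] 0) (𝓝 (∫ v in Ioi 0, (Real.exp (-v) * v ^ (s - 1)) • A)) by
    rw [Real.Gamma_eq_integral hs, ← integral_smul_const]
    refine this.congr' ?_
    filter_upwards [self_mem_nhdsWithin] with ω hω
    exact (rpow_smul_setIntegral_exp_neg_mul_rpow_smul g s hω).symm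
  refine tendsto_integral_filter_of_dominated_convergence
    (fun v ↦ Real.exp (-v) * v ^ (s - 1) * C) ?_ ?_ (kernel_integrable.mul_const C) ?_
  · filter_upwards [self_mem_nhdsWithin] with ω hω
    exact kernel_integrable.aestronglyMeasurable.smul
      (aestronglyMeasurable_comp_mul_left_Ioi hg (inv_pos.2 hω))
  · filter_upwards [self_mem_nhdsWithin] with ω hω
    filter_upwards [ae_restrict_mem measurableSet_Ioi] with v hv
    have kernel_nonneg : 0 ≤ Real.exp (-v) * v ^ (s - 1) :=
      mul_nonneg (Real.exp_pos _).le (Real.rpow_nonneg (mem_Ioi.1 hv).le _)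
    rw [norm_smul, Real.norm_of_nonneg kernel_nonneg]
    gcongr
    exact g_bound _ (mul_pos (inv_pos.2 hω) hv)
  · filter_upwards [ae_restrict_mem measurableSet_Ioi] with v hv
    exact (g_lim.comp (tendsto_inv_nhdsGT_zero.atTop_mul_const hv)).const_smul _

end Abelian

section ComplexPower

open Complex MeasureTheory Set
open scoped Topology

lemma ofReal_mul_cpow {r : ℝ} (hr : 0 ≤ r) (z w : ℂ) :
    ((r : ℂ) * z) ^ w = (r : ℂ) ^ w * z ^ w := by
  rcases eq_or_ne w 0 with rfl | hw
  · simp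
  rcases hr.eq_or_lt with rfl | r_pos
  · simp [hw]
  rcases eq_or_ne z 0 with rfl | hz
  · simp [hw]
  have hr' : (r : ℂ) ≠ 0 := ofReal_ne_zero.2 r_pos.ne'
  rw [cpow_def_of_ne_zero (mul_ne_zero hr' hz), cpow_def_of_ne_zero hr', cpow_def_of_ne_zero hz,
    log_ofReal_mul r_pos hz, ofReal_log hr, add_mul, exp_add]

lemma exp_ofReal_mul_I_mem_slitPlane {θ : ℝ} (hθ : θ ∈ Ioo (-Real.pi) Real.pi) :
    exp (θ * I) ∈ slitPlane := by
  rw [mem_slitPlane_iff_arg, ← Circle.coe_exp, Circle.arg_exp hθ.1 hθ.2.le]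
  exact ⟨hθ.2.ne, Circle.coe_ne_zero _⟩

lemma exp_ofReal_mul_I_cpow_ofReal_im {θ : ℝ} (hθ : θ ∈ Ioc (-Real.pi) Real.pi) (r : ℝ) :
    (exp (θ * I) ^ (r : ℂ)).im = Real.sin (θ * r) := by
  rw [cpow_ofReal_im, norm_exp_ofReal_mul_I, Real.one_rpow, one_mul, ← Circle.coe_exp,
    Circle.arg_exp hθ.1 hθ.2]

lemma exists_pos_le_norm_ofReal_add {c : ℂ} (hc : c ∈ slitPlane) :
    ∃ δ : ℝ, 0 < δ ∧ ∀ a : ℝ, 0 ≤ a → δ ≤ ‖(a : ℂ) + c‖ := by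
  rcases mem_slitPlane_iff.1 hc with re_pos | im_ne
  · refine ⟨c.re, re_pos, fun a ha ↦ ?_⟩
    calc c.re ≤ ((a : ℂ) + c).re := by simpa using ha
      _ ≤ ‖(a : ℂ) + c‖ := re_le_norm _
  · refine ⟨|c.im|, abs_pos.2 im_ne, fun a _ ↦ ?_⟩
    simpa using abs_im_le_norm ((a : ℂ) + c)

lemma exists_forall_norm_ofReal_add_cpow_neg_le {c : ℂ} (hc : c ∈ slitPlane) {β : ℝ}
    (hβ : 0 ≤ β) :
    ∃ C : ℝ, ∀ a : ℝ, 0 ≤ a → ‖((a : ℂ) + c) ^ (-(β : ℂ))‖ ≤ C := by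
  obtain ⟨δ, δ_pos, hδ⟩ := exists_pos_le_norm_ofReal_add hc
  refine ⟨δ ^ (-β), fun a ha ↦ ?_⟩
  rw [← ofReal_neg, norm_cpow_real]
  exact Real.rpow_le_rpow_of_nonpos δ_pos (hδ a ha) (neg_nonpos.2 hβ)

lemma one_add_mul_rpow_cpow_neg (c : ℂ) (α β : ℝ) {u : ℝ} (hu : 0 < u) :
    (1 + c * (u : ℂ) ^ (α : ℂ)) ^ (-(β : ℂ)) =
      u ^ (-(α * β)) • (((u ^ (-α) : ℝ) : ℂ) + c) ^ (-(β : ℂ)) := by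
  have factor : 1 + c * (u : ℂ) ^ (α : ℂ) = ((u ^ α : ℝ) : ℂ) * (((u ^ (-α) : ℝ) : ℂ) + c) := by
    rw [mul_add, ← ofReal_mul, ← Real.rpow_add hu, add_neg_cancel, Real.rpow_zero, ofReal_one,
      ofReal_cpow hu.le, mul_comm c]
  rw [factor, ofReal_mul_cpow (Real.rpow_nonneg hu.le α), ← ofReal_neg,
    ← ofReal_cpow (Real.rpow_nonneg hu.le α), ← Real.rpow_mul hu.le, mul_neg, real_smul]

lemma tendsto_ofReal_rpow_neg_add_cpow {c : ℂ} (hc : c ∈ slitPlane) {α : ℝ} (hα : 0 < α)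
    (w : ℂ) :
    Tendsto (fun u : ℝ ↦ (((u ^ (-α) : ℝ) : ℂ) + c) ^ w) atTop (𝓝 (c ^ w)) := by
  have base_lim : Tendsto (fun u : ℝ ↦ ((u ^ (-α) : ℝ) : ℂ) + c) atTop (𝓝 c) := by
    simpa using ((continuous_ofReal.tendsto 0).comp (tendsto_rpow_neg_atTop hα)).add_const c
  exact (continuousAt_id.cpow continuousAt_const hc).tendsto.comp base_lim

theorem tendsto_rpow_smul_setIntegral_exp_neg_mul_one_add_mul_rpow_cpow {c : ℂ}
    (hc : c ∈ slitPlane) {α β : ℝ} (hα : 0 < α) (hβ : 0 ≤ β) (hαβ : α * β < 1) :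
    Tendsto (fun ω : ℝ ↦ ω ^ (1 - α * β) • ∫ u in Ioi (0 : ℝ),
        exp (-(ω * u : ℝ)) * (1 + c * (u : ℂ) ^ (α : ℂ)) ^ (-(β : ℂ)))
      (𝓝[>] 0) (𝓝 (Real.Gamma (1 - α * β) • c ^ (-(β : ℂ)))) := by
  obtain ⟨C, hC⟩ := exists_forall_norm_ofReal_add_cpow_neg_le hc hβ
  have abelian := tendsto_rpow_smul_setIntegral_exp_neg_mul_rpow_smul (sub_pos.2 hαβ)
    (Measurable.aestronglyMeasurable (by fun_prop))
    (fun u hu ↦ hC (u ^ (-α)) (Real.rpow_nonneg hu.le _))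
    (tendsto_ofReal_rpow_neg_add_cpow hc hα (-(β : ℂ)))
  refine abelian.congr fun ω ↦ ?_
  congr 1
  refine setIntegral_congr_fun measurableSet_Ioi fun u hu ↦ ?_
  rw [one_add_mul_rpow_cpow_neg c α β hu, mul_smul, sub_sub_cancel_left, real_smul,
    ofReal_exp, ofReal_neg]

end ComplexPower

/-- Low-frequency behavior of the spectral density of the one-dimensional GFGCC in the
long-range-dependence regime `αβ < 1`:
`lim_{ω→0⁺} ω^{1−αβ} S_{α,β}(ω) = (1/π)Γ(1−αβ) sin(παβ/2)`. -/
theorem gfgcc_spectral_low_frequency_lrd (α β : ℝ)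
    (hα : α ∈ Set.Ioo (0 : ℝ) 2) (hβ : 0 < β) (hαβ : α * β < 1) :
    Tendsto (fun ω : ℝ => ω ^ (1 - α * β) * gfgccSpectralDensity α β ω)
      (nhdsWithin 0 (Set.Ioi 0))
      (nhds (1 / Real.pi * Real.Gamma (1 - α * β) * Real.sin (Real.pi * α * β / 2))) := by
  set θ : ℝ := Real.pi * α / 2 with hθ
  have θ_cast : (Real.pi : ℂ) * (α : ℂ) / 2 = (θ : ℂ) := by simp [hθ]
  have θ_mem : θ ∈ Set.Ioo (-Real.pi) Real.pi := by
    constructor <;> nlinarith [Real.pi_pos, hα.1, hα.2]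
  have power_im : (Complex.exp (θ * Complex.I) ^ (-(β : ℂ))).im =
      -Real.sin (Real.pi * α * β / 2) := by
    rw [← Complex.ofReal_neg, exp_ofReal_mul_I_cpow_ofReal_im (Set.Ioo_subset_Ioc_self θ_mem),
      ← Real.sin_neg, hθ]
    ring_nf
  have laplace := tendsto_rpow_smul_setIntegral_exp_neg_mul_one_add_mul_rpow_cpow
    (exp_ofReal_mul_I_mem_slitPlane θ_mem) hα.1 hβ.le hαβ
  have im_laplace := ((Complex.continuous_im.tendsto _).comp laplace).const_mul (-(1 / Real.pi))
  rw [Complex.smul_im, power_im] at im_laplace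
  convert im_laplace using 2
  · rw [gfgccSpectralDensity, θ_cast, Function.comp_apply, Complex.smul_im, smul_eq_mul]
    ring
  · rw [smul_eq_mul]
    ring
end

section
/- Let α ∈ (0,2) and β > 0 with αβ > 1, and define S_{α,β}(ω) = −(1/π) Im ∫₀^∞ e^{−ωu} (1 + e^{iπα/2} u^α)^{−β} du for ω > 0 (principal branch). Then lim_{ω→0⁺} S_{α,β}(ω) = Γ(1/α) Γ(β − 1/α) / (π α Γ(β)). (The spectral density of the one-dimensional GFGCC has a finite positive limit at zero frequency in the short-range-dependence regime αβ > 1.) -/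
open Filter

/-!
By dominated convergence the limit is `-(1/π) Im ∫₀^∞ (1 + c u^α)^{-β} du` with `c = e^{iπα/2}`.
Substituting `t = u^α` turns this integral into the Mellin transform of `t ↦ (1 + c t)^{-β}` at
`1/α`. For positive real `c` scaling reduces that transform to the Beta integral and gives
`c^{-1/α} B(1/α, β - 1/α)`; both sides are holomorphic in `c` on the slit plane, so they agree
there. Since `0 < α < 2`, the point `c = e^{iπα/2}` lies in the slit plane and `c^{-1/α} = -i`.
-/

open Complex MeasureTheory Set Topology

theorem ofReal_mul_cpow_of_pos {r : ℝ} (hr : 0 < r) (z w : ℂ) :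
    ((r : ℂ) * z) ^ w = (r : ℂ) ^ w * z ^ w := by
  have hr' : (r : ℂ) ≠ 0 := ofReal_ne_zero.mpr hr.ne'
  rcases eq_or_ne z 0 with rfl | hz
  · rcases eq_or_ne w 0 with rfl | hw
    · simp
    · simp [hw]
  · rw [cpow_def_of_ne_zero (mul_ne_zero hr' hz), cpow_def_of_ne_zero hr', cpow_def_of_ne_zero hz,
      log_ofReal_mul hr hz, ofReal_log hr.le, add_mul, Complex.exp_add]

theorem eqOn_slitPlane_of_forall_ofReal_pos {f g : ℂ → ℂ} (hf : DifferentiableOn ℂ f slitPlane)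
    (hg : DifferentiableOn ℂ g slitPlane) (hfg : ∀ r : ℝ, 0 < r → f r = g r) :
    EqOn f g slitPlane := by
  have hpreconnected : IsPreconnected slitPlane :=
    (starConvex_one_slitPlane.isPathConnected one_mem_slitPlane).isConnected.isPreconnected
  have htendsto : Tendsto ((↑) : ℝ → ℂ) (𝓝[>] 1) (𝓝[≠] 1) :=
    tendsto_nhdsWithin_of_tendsto_nhds_of_eventually_within _
      ((continuous_ofReal.tendsto' 1 1 ofReal_one).mono_left nhdsWithin_le_nhds)
      (by
        filter_upwards [self_mem_nhdsWithin] with r hr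
        exact ofReal_ne_one.2 (ne_of_gt hr))
  refine (hf.analyticOnNhd isOpen_slitPlane).eqOn_of_preconnected_of_frequently_eq
    (hg.analyticOnNhd isOpen_slitPlane) hpreconnected one_mem_slitPlane
    (htendsto.frequently (Eventually.frequently ?_))
  filter_upwards [self_mem_nhdsWithin] with r hr
  exact hfg r (zero_lt_one.trans hr)

theorem one_add_mul_ofReal_mem_slitPlane_s10 {c : ℂ} (hc : c ∈ slitPlane) {t : ℝ} (ht : 0 < t) :
    1 + c * t ∈ slitPlane := by
  rw [mem_slitPlane_iff] at hc ⊢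
  rcases hc with hre | him
  · left
    simp only [add_re, one_re, re_mul_ofReal]
    positivity
  · right
    simpa [ht.ne'] using him

-- Dividing by `1 + t` moves `1 + c t` onto the segment from `1` to `c`, and these segments sweep
-- out a compact subset of the slit plane as `c` ranges over `K`.
theorem exists_norm_one_add_mul_cpow_le {K : Set ℂ} (hK : IsCompact K) (hKs : K ⊆ slitPlane)
    (w : ℂ) :
    ∃ C : ℝ, ∀ c ∈ K, ∀ t : ℝ, 0 < t → ‖(1 + c * t) ^ w‖ ≤ C * ‖(1 + t : ℂ) ^ w‖ := by
  have hcont : ContinuousOn (fun p : ℂ × ℝ => ((1 - p.2 : ℂ) + p.2 * p.1) ^ w)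
      (K ×ˢ Icc (0 : ℝ) 1) := by
    refine ContinuousOn.cpow_const (by fun_prop) fun ⟨c, x⟩ ⟨hc, hx⟩ => ?_
    simpa using starConvex_one_slitPlane (hKs hc) (sub_nonneg.2 hx.2) hx.1 (sub_add_cancel 1 x)
  obtain ⟨C, hC⟩ := (hK.prod isCompact_Icc).exists_bound_of_continuousOn hcont
  refine ⟨C, fun c hc t ht => ?_⟩
  have ht1 : 0 < 1 + t := by positivity
  have hsegment : (1 + c * t : ℂ) =
      ((1 + t : ℝ) : ℂ) * ((1 - (t / (1 + t) : ℝ) : ℂ) + (t / (1 + t) : ℝ) * c) := by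
    have : (1 + t : ℂ) ≠ 0 := mod_cast ht1.ne'
    push_cast
    field_simp
    ring
  have hx : t / (1 + t) ∈ Icc (0 : ℝ) 1 :=
    ⟨by positivity, (div_le_one ht1).2 (by linarith)⟩
  rw [hsegment, ofReal_mul_cpow_of_pos ht1, norm_mul, mul_comm C, ofReal_add, ofReal_one]
  gcongr
  exact hC (c, t / (1 + t)) ⟨hc, hx⟩

theorem image_div_one_sub_Ioo : (fun x : ℝ => x / (1 - x)) '' Ioo 0 1 = Ioi 0 := by
  ext t
  constructor
  · rintro ⟨x, ⟨hx0, hx1⟩, rfl⟩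
    exact div_pos hx0 (sub_pos.2 hx1)
  · intro ht
    have ht0 : 0 < t := ht
    refine ⟨t / (1 + t), ⟨by positivity, (div_lt_one (by positivity)).2 (by linarith)⟩, ?_⟩
    simp only
    field_simp
    ring

theorem injOn_div_one_sub_Ioo : InjOn (fun x : ℝ => x / (1 - x)) (Ioo 0 1) := by
  intro x hx y hy hxy
  have hx1 : 1 - x ≠ 0 := (sub_pos.2 hx.2).ne'
  have hy1 : 1 - y ≠ 0 := (sub_pos.2 hy.2).ne'
  field_simp at hxy
  linarith

theorem hasDerivAt_div_one_sub {x : ℝ} (hx : x ≠ 1) :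
    HasDerivAt (fun x : ℝ => x / (1 - x)) ((1 - x) ^ 2)⁻¹ x := by
  have hx1 : 1 - x ≠ 0 := sub_ne_zero.2 hx.symm
  convert! (hasDerivAt_id x).div ((hasDerivAt_id x).const_sub 1) hx1 using 1
  simp [div_eq_mul_inv]

theorem jacobian_smul_mellin_integrand_one_add_cpow {x : ℝ} (hx : x ∈ Ioo (0 : ℝ) 1) (u v : ℂ) :
    |((1 - x) ^ 2)⁻¹| • (((x / (1 - x) : ℝ) : ℂ) ^ (u - 1) •
      (1 + ((x / (1 - x) : ℝ) : ℂ)) ^ (-(u + v))) = (x : ℂ) ^ (u - 1) * (1 - x) ^ (v - 1) := by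
  have hy : 0 < 1 - x := sub_pos.2 hx.2
  have hy' : ((1 - x : ℝ) : ℂ) ≠ 0 := ofReal_ne_zero.2 hy.ne'
  have hone_add : 1 + ((x / (1 - x) : ℝ) : ℂ) = ((1 - x)⁻¹ : ℝ) := by
    rw [← ofReal_one, ← ofReal_add]
    congr 1
    field_simp
    ring
  have hinv (w : ℂ) : (((1 - x)⁻¹ : ℝ) : ℂ) ^ w = ((1 - x : ℝ) : ℂ) ^ (-w) := by
    rw [ofReal_inv, inv_cpow _ _ (slitPlane_arg_ne_pi (ofReal_mem_slitPlane.2 hy)), cpow_neg]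
  have hjacobian : ((((1 - x) ^ 2)⁻¹ : ℝ) : ℂ) = ((1 - x : ℝ) : ℂ) ^ (-2 : ℂ) := by
    rw [cpow_neg, cpow_ofNat, ofReal_inv, ofReal_pow]
  rw [abs_of_nonneg (by positivity), real_smul, smul_eq_mul, hone_add, hjacobian, div_eq_mul_inv,
    ofReal_mul, ofReal_mul_cpow_of_pos hx.1, hinv, hinv]
  calc _ = (x : ℂ) ^ (u - 1) * (((1 - x : ℝ) : ℂ) ^ (-2 : ℂ) *
        ((1 - x : ℝ) : ℂ) ^ (-(u - 1)) * ((1 - x : ℝ) : ℂ) ^ (- -(u + v))) := by ring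
    _ = _ := by
      rw [← cpow_add _ _ hy', ← cpow_add _ _ hy', ofReal_sub, ofReal_one]
      ring_nf

section BetaMellin

variable {u v c : ℂ}

theorem hasMellin_one_add_cpow (hu : 0 < u.re) (hv : 0 < v.re) :
    HasMellin (fun t : ℝ => (1 + t : ℂ) ^ (-(u + v))) u (betaIntegral u v) := by
  have hderiv : ∀ x ∈ Ioo (0 : ℝ) 1,
      HasDerivWithinAt (fun x : ℝ => x / (1 - x)) ((1 - x) ^ 2)⁻¹ (Ioo 0 1) x :=
    fun x hx => (hasDerivAt_div_one_sub hx.2.ne).hasDerivWithinAt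
  have hpullback : EqOn _ _ (Ioo (0 : ℝ) 1) := fun x hx =>
    jacobian_smul_mellin_integrand_one_add_cpow hx u v
  constructor
  · rw [MellinConvergent, ← image_div_one_sub_Ioo,
      integrableOn_image_iff_integrableOn_abs_deriv_smul measurableSet_Ioo hderiv
        injOn_div_one_sub_Ioo, integrableOn_congr_fun hpullback measurableSet_Ioo,
      ← intervalIntegrable_iff_integrableOn_Ioo_of_le zero_le_one]
    exact betaIntegral_convergent hu hv
  · rw [mellin, ← image_div_one_sub_Ioo,
      integral_image_eq_integral_abs_deriv_smul measurableSet_Ioo hderiv injOn_div_one_sub_Ioo,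
      setIntegral_congr_fun measurableSet_Ioo hpullback, betaIntegral,
      intervalIntegral.integral_of_le zero_le_one, integral_Ioc_eq_integral_Ioo]

theorem measurable_mellin_integrand_one_add_mul_cpow (s c w : ℂ) :
    Measurable fun t : ℝ => (t : ℂ) ^ (s - 1) • (1 + c * t) ^ w := by
  fun_prop

theorem exists_mellin_integrand_one_add_mul_cpow_bound (hu : 0 < u.re) (hv : 0 < v.re)
    {K : Set ℂ} (hK : IsCompact K) (hKs : K ⊆ slitPlane) :
    ∃ bound : ℝ → ℝ, IntegrableOn bound (Ioi 0) ∧ ∀ c ∈ K, ∀ t ∈ Ioi (0 : ℝ),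
      ‖(t : ℂ) ^ (u - 1) • (1 + c * t) ^ (-(u + v))‖ ≤ bound t := by
  obtain ⟨C, hC⟩ := exists_norm_one_add_mul_cpow_le hK hKs (-(u + v))
  refine ⟨_, (hasMellin_one_add_cpow hu hv).1.norm.const_mul C, fun c hc t ht => ?_⟩
  rw [norm_smul, norm_smul, mul_left_comm]
  gcongr
  exact hC c hc t ht

theorem mellinConvergent_one_add_mul_cpow (hu : 0 < u.re) (hv : 0 < v.re) (hc : c ∈ slitPlane) :
    MellinConvergent (fun t : ℝ => (1 + c * t) ^ (-(u + v))) u := by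
  obtain ⟨bound, hbound, hle⟩ := exists_mellin_integrand_one_add_mul_cpow_bound hu hv
    isCompact_singleton (singleton_subset_iff.2 hc)
  exact hbound.mono' (measurable_mellin_integrand_one_add_mul_cpow _ _ _).aestronglyMeasurable
    (ae_restrict_of_forall_mem measurableSet_Ioi (hle c rfl))

theorem hasDerivAt_mellin_integrand_one_add_mul_cpow (s w : ℂ) (hc : c ∈ slitPlane) {t : ℝ}
    (ht : 0 < t) :
    HasDerivAt (fun z : ℂ => (t : ℂ) ^ (s - 1) • (1 + z * t) ^ w)
      (w * ((t : ℂ) ^ (s + 1 - 1) • (1 + c * t) ^ (w - 1))) c := by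
  have hbase : HasDerivAt (fun z : ℂ => 1 + z * t) t c := by
    simpa using ((hasDerivAt_id c).mul_const (t : ℂ)).const_add 1
  convert! (hbase.cpow_const (one_add_mul_ofReal_mem_slitPlane_s10 hc ht)).const_smul
    ((t : ℂ) ^ (s - 1)) using 1
  rw [add_sub_right_comm, cpow_add _ _ (ofReal_ne_zero.2 ht.ne'), cpow_one]
  simp only [smul_eq_mul]
  ring

theorem hasDerivAt_mellin_one_add_mul_cpow (hu : 0 < u.re) (hv : 0 < v.re)
    (hc : c ∈ slitPlane) :
    HasDerivAt (fun z : ℂ => mellin (fun t : ℝ => (1 + z * t) ^ (-(u + v))) u)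
      (-(u + v) * mellin (fun t : ℝ => (1 + c * t) ^ (-(u + 1 + v))) (u + 1)) c := by
  obtain ⟨K, hK, hcK, hKs⟩ := exists_compact_subset isOpen_slitPlane hc
  have hu' : 0 < (u + 1).re := by
    rw [add_re, one_re]
    positivity
  obtain ⟨bound, hbound, hle⟩ := exists_mellin_integrand_one_add_mul_cpow_bound hu' hv hK hKs
  have hexp : -(u + 1 + v) = -(u + v) - 1 := by ring
  rw [hexp] at hle ⊢
  simp only [mellin, ← integral_const_mul]
  have hmeas := measurable_mellin_integrand_one_add_mul_cpow
  refine (hasDerivAt_integral_of_dominated_loc_of_deriv_le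
    (F := fun (z : ℂ) (t : ℝ) => (t : ℂ) ^ (u - 1) • (1 + z * t) ^ (-(u + v)))
    (F' := fun (z : ℂ) (t : ℝ) =>
      -(u + v) * ((t : ℂ) ^ (u + 1 - 1) • (1 + z * t) ^ (-(u + v) - 1)))
    (bound := fun t => ‖-(u + v)‖ * bound t) (mem_interior_iff_mem_nhds.1 hcK)
    (.of_forall fun _ => (hmeas _ _ _).aestronglyMeasurable)
    (mellinConvergent_one_add_mul_cpow hu hv hc)
    ((hmeas _ _ _).const_mul _).aestronglyMeasurable ?_ (hbound.const_mul _) ?_).2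
  · refine ae_restrict_of_forall_mem measurableSet_Ioi fun t ht z hz => ?_
    rw [norm_mul]
    gcongr
    exact hle z hz t ht
  · exact ae_restrict_of_forall_mem measurableSet_Ioi fun t ht z hz =>
      hasDerivAt_mellin_integrand_one_add_mul_cpow _ _ (hKs hz) ht

theorem mellin_one_add_ofReal_mul_cpow (hu : 0 < u.re) (hv : 0 < v.re) {r : ℝ} (hr : 0 < r) :
    mellin (fun t : ℝ => (1 + r * t : ℂ) ^ (-(u + v))) u = (r : ℂ) ^ (-u) * betaIntegral u v := by
  have hscale := mellin_comp_mul_left (fun t : ℝ => (1 + t : ℂ) ^ (-(u + v))) u hr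
  rw [(hasMellin_one_add_cpow hu hv).2, smul_eq_mul] at hscale
  simpa only [ofReal_mul] using hscale

theorem hasMellin_one_add_mul_cpow (hu : 0 < u.re) (hv : 0 < v.re) (hc : c ∈ slitPlane) :
    HasMellin (fun t : ℝ => (1 + c * t) ^ (-(u + v))) u (c ^ (-u) * betaIntegral u v) := by
  have heqOn : EqOn (fun z : ℂ => mellin (fun t : ℝ => (1 + z * t) ^ (-(u + v))) u)
      (fun z => z ^ (-u) * betaIntegral u v) slitPlane := by
    refine eqOn_slitPlane_of_forall_ofReal_pos (fun z hz => ?_) (fun z hz => ?_)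
      (fun r hr => mellin_one_add_ofReal_mul_cpow hu hv hr)
    · exact (hasDerivAt_mellin_one_add_mul_cpow hu hv hz).differentiableAt.differentiableWithinAt
    · exact ((differentiableAt_id.cpow_const hz).mul_const _).differentiableWithinAt
  exact ⟨mellinConvergent_one_add_mul_cpow hu hv hc, heqOn hc⟩

theorem hasMellin_one_add_mul_rpow_cpow {a : ℝ} (ha : a ≠ 0) {s b : ℂ} (hs : 0 < (s / a).re)
    (hb : (s / a).re < b.re) (hc : c ∈ slitPlane) :
    HasMellin (fun t : ℝ => (1 + c * (t ^ a : ℝ)) ^ (-b)) s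
      (|a|⁻¹ • (c ^ (-(s / a)) * betaIntegral (s / a) (b - s / a))) := by
  have hv : 0 < (b - s / a).re := by
    rw [sub_re]
    exact sub_pos.2 hb
  obtain ⟨hconv, hval⟩ := hasMellin_one_add_mul_cpow hs hv hc
  rw [add_sub_cancel] at hconv hval
  exact ⟨(MellinConvergent.comp_rpow (f := fun t : ℝ => (1 + c * t) ^ (-b)) ha).2 hconv,
    by rw [mellin_comp_rpow (fun t : ℝ => (1 + c * t) ^ (-b)), hval]⟩

end BetaMellin

theorem tendsto_integral_Ioi_exp_neg_mul_smul {E : Type*} [NormedAddCommGroup E] [NormedSpace ℝ E]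
    {f : ℝ → E} {μ : Measure ℝ} (hf : IntegrableOn f (Ioi 0) μ) :
    Tendsto (fun ω : ℝ => ∫ u in Ioi 0, Real.exp (-(ω * u)) • f u ∂μ) (𝓝[>] 0)
      (𝓝 (∫ u in Ioi 0, f u ∂μ)) := by
  refine tendsto_integral_filter_of_dominated_convergence (fun u => ‖f u‖)
    (.of_forall fun ω => ?_) ?_ hf.norm (ae_of_all _ fun u => ?_)
  · exact Continuous.aestronglyMeasurable (by fun_prop) |>.smul hf.aestronglyMeasurable
  · filter_upwards [self_mem_nhdsWithin] with ω hω
    refine ae_restrict_of_forall_mem measurableSet_Ioi fun u hu => ?_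
    rw [norm_smul, Real.norm_of_nonneg (Real.exp_nonneg _)]
    refine mul_le_of_le_one_left (norm_nonneg _) (Real.exp_le_one_iff.2 ?_)
    exact neg_nonpos.2 (mul_pos hω hu).le
  · have hcont : Continuous fun ω : ℝ => Real.exp (-(ω * u)) • f u := by fun_prop
    exact (hcont.tendsto' 0 (f u) (by simp)).mono_left nhdsWithin_le_nhds

section Rotation

variable {α : ℝ}

theorem exp_pi_mul_div_two_mul_I_mem_slitPlane (hα : α ∈ Ioo (0 : ℝ) 2) :
    cexp (Real.pi * α / 2 * I) ∈ slitPlane := by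
  have hsin : 0 < Real.sin (Real.pi * α / 2) :=
    Real.sin_pos_of_pos_of_lt_pi (by have := hα.1; positivity) (by nlinarith [Real.pi_pos, hα.2])
  refine mem_slitPlane_iff.2 (Or.inr ?_)
  have him := exp_ofReal_mul_I_im (Real.pi * α / 2)
  push_cast at him
  exact him ▸ hsin.ne'

theorem exp_pi_mul_div_two_mul_I_cpow_neg_one_div (hα : α ∈ Ioc (0 : ℝ) 2) :
    cexp (Real.pi * α / 2 * I) ^ (-(1 / α) : ℂ) = -I := by
  have him : ((Real.pi : ℂ) * α / 2 * I).im = Real.pi * α / 2 := by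
    simp
  have hlog : log (cexp (Real.pi * α / 2 * I)) = Real.pi * α / 2 * I :=
    log_exp (by rw [him]; nlinarith [Real.pi_pos, mul_pos Real.pi_pos hα.1])
      (by rw [him]; nlinarith [Real.pi_pos, hα.2])
  have hα' : (α : ℂ) ≠ 0 := ofReal_ne_zero.2 hα.1.ne'
  have harg : (Real.pi : ℂ) * α / 2 * I * (-(1 / α)) = -(Real.pi / 2 * I) := by field_simp
  rw [cpow_def_of_ne_zero (exp_ne_zero _), hlog, harg, Complex.exp_neg, exp_pi_div_two_mul_I, inv_I]

end Rotation

theorem betaIntegral_ofReal {x y : ℝ} (hx : 0 < x) (hy : 0 < y) :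
    betaIntegral x y = (Real.Gamma x * Real.Gamma y / Real.Gamma (x + y) : ℝ) := by
  rw [betaIntegral_eq_Gamma_mul_div _ _ (by simpa) (by simpa), ← ofReal_add, Gamma_ofReal,
    Gamma_ofReal, Gamma_ofReal, ofReal_div, ofReal_mul]

theorem gfgccSpectralDensity_eq (α β ω : ℝ) :
    gfgccSpectralDensity α β ω = -(1 / Real.pi) * (∫ u in Ioi (0 : ℝ), Real.exp (-(ω * u)) •
      (1 + cexp (Real.pi * α / 2 * I) * (u ^ α : ℝ)) ^ (-(β : ℂ))).im := by
  rw [gfgccSpectralDensity]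
  congr 2
  refine setIntegral_congr_fun measurableSet_Ioi fun u hu => ?_
  have hu0 : 0 ≤ u := le_of_lt hu
  simp only [ofReal_cpow hu0, real_smul, ofReal_exp, ofReal_neg]

theorem hasMellin_gfgcc_integrand {α β : ℝ} (hα : α ∈ Ioo (0 : ℝ) 2) (hαβ : 1 < α * β) :
    HasMellin (fun u : ℝ => (1 + cexp (Real.pi * α / 2 * I) * (u ^ α : ℝ)) ^ (-(β : ℂ))) 1
      (-(Real.Gamma (1 / α) * Real.Gamma (β - 1 / α) / (α * Real.Gamma β) : ℝ) * I) := by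
  have hα0 : 0 < α := hα.1
  have hβα : 1 / α < β := (div_lt_iff₀' hα0).2 hαβ
  have hcast : (1 : ℂ) / α = (1 / α : ℝ) := by push_cast; rfl
  have hmellin := hasMellin_one_add_mul_rpow_cpow (s := 1) (b := β) hα0.ne'
    (by rw [hcast, ofReal_re]; positivity) (by rwa [hcast, ofReal_re, ofReal_re])
    (exp_pi_mul_div_two_mul_I_mem_slitPlane hα)
  rw [exp_pi_mul_div_two_mul_I_cpow_neg_one_div ⟨hα.1, hα.2.le⟩, hcast, ← ofReal_sub,
    betaIntegral_ofReal (by positivity) (sub_pos.2 hβα), add_sub_cancel, abs_of_pos hα0,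
    real_smul] at hmellin
  convert! hmellin using 1
  push_cast
  ring

/-- Finite zero-frequency limit of the spectral density of the one-dimensional GFGCC in the
short-range-dependence regime `αβ > 1`:
`lim_{ω→0⁺} S_{α,β}(ω) = Γ(1/α)Γ(β − 1/α)/(παΓ(β))`. -/
theorem gfgcc_spectral_low_frequency_srd (α β : ℝ)
    (hα : α ∈ Set.Ioo (0 : ℝ) 2) (hβ : 0 < β) (hαβ : 1 < α * β) :
    Tendsto (gfgccSpectralDensity α β) (nhdsWithin 0 (Set.Ioi 0))
      (nhds (Real.Gamma (1 / α) * Real.Gamma (β - 1 / α) / (Real.pi * α * Real.Gamma β))) := by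
  obtain ⟨hint, hval⟩ := hasMellin_gfgcc_integrand hα hαβ
  simp only [MellinConvergent, mellin, sub_self, cpow_zero, one_smul] at hint hval
  have hlim := ((continuous_im.tendsto _).comp
    (tendsto_integral_Ioi_exp_neg_mul_smul hint)).const_mul (-(1 / Real.pi))
  rw [hval] at hlim
  convert! hlim using 2
  · exact gfgccSpectralDensity_eq α β _
  · rw [← ofReal_neg, im_ofReal_mul, I_im]
    field_simp
end

section
/- Let n ≥ 1, α ∈ (0,2]ⁿ, β ∈ (0,∞)ⁿ, and fix u, v ∈ ℝⁿ. For ε ∈ ℝ₊ⁿ, the total-increment covariance of the GSGCC factorizes: Σ_{δ∈{0,1}ⁿ} Σ_{η∈{0,1}ⁿ} (−1)^{Σᵢδᵢ + Σᵢηᵢ} C^#_{α,β}( Σᵢ εᵢ(δᵢuᵢ − ηᵢvᵢ)eᵢ ) = Πᵢ [ 1 − (1+|εᵢuᵢ|^{αᵢ})^{−βᵢ} − (1+|εᵢvᵢ|^{αᵢ})^{−βᵢ} + (1+|εᵢ(uᵢ−vᵢ)|^{αᵢ})^{−βᵢ} ], and as ε → 0 in ℝ₊ⁿ (each εᵢ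 → 0⁺), ( Πᵢ εᵢ^{αᵢ} )^{−1} times this quantity converges to Πᵢ βᵢ( |uᵢ|^{αᵢ} + |vᵢ|^{αᵢ} − |uᵢ−vᵢ|^{αᵢ} ). (Up to the factor Πᵢ 2βᵢ this is the covariance of the fractional Brownian sheet of index α/2, identifying the local multi-self-similar limit of the GSGCC.) -/
open Filter Finset
open scoped Topology

/-!
The alternating sums of a product kernel can be carried out one coordinate at a time. Each resulting
factor is a combination of values `φ (|ε c| ^ a)` with `φ x = (1 + x) ^ (-b)`, and
`φ (|ε c| ^ a) = φ 0 + φ' 0 * |c| ^ a * ε ^ a + o(ε ^ a)`: the constant terms cancel, so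
after division by `ε ^ a` the factor tends to a multiple of `φ' 0 = -b`.
-/

section ProductKernel

variable {ι A R : Type*} [Fintype ι] [DecidableEq ι] [AddGroup A] [CommRing R]

/-- The covariance of the total increments `□_u X(t)` and `□_v X(t)` of a stationary field `X` with
covariance `C`. A subset of coordinates is encoded as a map `ι → Bool`; both signs `(-1) ^ n` in the
definition of the increments cancel. -/
def totalIncrementCov (C : (ι → A) → R) (u v : ι → A) : R :=
  ∑ δ : ι → Bool, ∑ η : ι → Bool,
    (-1 : R) ^ ((∑ i, if δ i then 1 else 0) + ∑ i, if η i then 1 else 0 : ℕ) *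
      C fun i => (if δ i then u i else 0) - (if η i then v i else 0)

theorem sum_neg_one_pow_mul_prod_bool (f : ι → Bool → R) :
    ∑ δ : ι → Bool, (-1 : R) ^ (∑ i, if δ i then 1 else 0 : ℕ) * ∏ i, f i (δ i) =
      ∏ i, (f i false - f i true) := by
  calc
    _ = ∑ δ : ι → Bool, ∏ i, (-1 : R) ^ (if δ i then 1 else 0 : ℕ) * f i (δ i) := by
      simp only [prod_mul_distrib, prod_pow_eq_pow_sum]
    _ = ∏ i, ∑ b : Bool, (-1 : R) ^ (if b then 1 else 0 : ℕ) * f i b :=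
      (Fintype.prod_sum fun i b => (-1 : R) ^ (if b then 1 else 0 : ℕ) * f i b).symm
    _ = ∏ i, (f i false - f i true) := by
      simp [sub_eq_neg_add]

theorem totalIncrementCov_prod (k : ι → A → R) (u v : ι → A) :
    totalIncrementCov (fun τ => ∏ i, k i (τ i)) u v =
      ∏ i, (k i 0 - k i (u i) - k i (-v i) + k i (u i - v i)) := by
  let F (i : ι) (a b : Bool) : R := k i ((if a then u i else 0) - (if b then v i else 0))
  calc
    _ = ∑ δ : ι → Bool, (-1 : R) ^ (∑ i, if δ i then 1 else 0 : ℕ) *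
          ∑ η : ι → Bool, (-1 : R) ^ (∑ i, if η i then 1 else 0 : ℕ) *
            ∏ i, F i (δ i) (η i) := by
      simp only [totalIncrementCov, F, pow_add, mul_assoc, mul_sum]
    _ = ∏ i, ((F i false false - F i false true) - (F i true false - F i true true)) := by
      simp only [sum_neg_one_pow_mul_prod_bool fun i => F i _,
        sum_neg_one_pow_mul_prod_bool fun i a => F i a false - F i a true]
    _ = _ := by
      refine prod_congr rfl fun i _ => ?_
      simp only [F, Bool.false_eq_true, if_true, if_false, sub_zero, zero_sub]
      ring

end ProductKernel

section PowerScaling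

variable {E : Type*} [NormedAddCommGroup E] [NormedSpace ℝ E] {φ : ℝ → E} {φ' : E} {a : ℝ}

theorem tendsto_rpow_nhdsGT_zero (ha : 0 < a) :
    Tendsto (fun x : ℝ => x ^ a) (𝓝[>] 0) (𝓝[>] 0) := by
  refine tendsto_nhdsWithin_iff.2 ⟨?_, ?_⟩
  · simpa only [Real.zero_rpow ha.ne'] using
      (Real.continuousAt_rpow_const 0 a (Or.inr ha.le)).tendsto.mono_left nhdsWithin_le_nhds
  · filter_upwards [self_mem_nhdsWithin] with x hx using Real.rpow_pos_of_pos hx a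

theorem tendsto_inv_rpow_smul_sub_of_hasDerivWithinAt (hφ : HasDerivWithinAt φ φ' (Set.Ici 0) 0)
    (ha : 0 < a) (c : ℝ) :
    Tendsto (fun ε : ℝ => (ε ^ a)⁻¹ • (φ (|ε * c| ^ a) - φ 0)) (𝓝[>] 0)
      (𝓝 (|c| ^ a • φ')) := by
  have hc : 0 ≤ |c| ^ a := by positivity
  have hφ_mul : HasDerivWithinAt (fun x => φ (x * |c| ^ a)) (|c| ^ a • φ') (Set.Ioi 0) 0 := by
    have hmul : HasDerivWithinAt (fun x : ℝ => x * |c| ^ a) (|c| ^ a) (Set.Ioi 0) 0 := by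
      simpa using (hasDerivWithinAt_id (0 : ℝ) _).mul_const (|c| ^ a)
    exact HasDerivWithinAt.scomp_of_eq 0 hφ hmul
      (fun x (hx : 0 < x) => mul_nonneg hx.le hc) (zero_mul _).symm
  have hslope := (hasDerivWithinAt_iff_tendsto_slope' Set.self_notMem_Ioi).1 hφ_mul
  refine (hslope.comp (tendsto_rpow_nhdsGT_zero ha)).congr' ?_
  filter_upwards [self_mem_nhdsWithin] with ε (hε : 0 < ε)
  simp only [Function.comp_apply, slope_def_module, sub_zero, zero_mul, abs_mul, abs_of_pos hε,
    Real.mul_rpow hε.le (abs_nonneg c)]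

theorem tendsto_inv_rpow_smul_increment_of_hasDerivWithinAt
    (hφ : HasDerivWithinAt φ φ' (Set.Ici 0) 0) (ha : 0 < a) (u v : ℝ) :
    Tendsto
      (fun ε : ℝ => (ε ^ a)⁻¹ •
        (φ 0 - φ (|ε * u| ^ a) - φ (|ε * v| ^ a) + φ (|ε * (u - v)| ^ a)))
      (𝓝[>] 0) (𝓝 ((|u| ^ a + |v| ^ a - |u - v| ^ a) • -φ')) := by
  have hlim (c : ℝ) := tendsto_inv_rpow_smul_sub_of_hasDerivWithinAt hφ ha c
  convert ((hlim (u - v)).sub (hlim u)).sub (hlim v) using 2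
  · simp only [← smul_sub]
    congr 1
    abel
  · module

end PowerScaling

theorem hasDerivAt_one_add_rpow_neg_zero (b : ℝ) :
    HasDerivAt (fun x : ℝ => (1 + x) ^ (-b)) (-b) 0 := by
  simpa using ((hasDerivAt_id (0 : ℝ)).const_add 1).rpow_const (p := -b) (Or.inl (by simp))

section GeneralizedCauchy

variable {ι : Type*} [Fintype ι]

/-- The covariance `C^#_{α,β}` of the Gaussian sheet with generalized Cauchy covariance, as a
function of the lag `τ`. -/
noncomputable def gsgccCov (α β τ : ι → ℝ) : ℝ :=
  ∏ i, (1 + |τ i| ^ α i) ^ (-(β i))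

variable [DecidableEq ι]

theorem totalIncrementCov_gsgccCov {α : ι → ℝ} (hα : ∀ i, 0 < α i) (β u v ε : ι → ℝ) :
    totalIncrementCov (fun τ => gsgccCov α β (ε * τ)) u v =
      ∏ i, (1 - (1 + |ε i * u i| ^ α i) ^ (-(β i)) - (1 + |ε i * v i| ^ α i) ^ (-(β i))
        + (1 + |ε i * (u i - v i)| ^ α i) ^ (-(β i))) := by
  refine (totalIncrementCov_prod (fun i x => (1 + |ε i * x| ^ α i) ^ (-(β i))) u v).trans ?_
  simp only [mul_zero, abs_zero, Real.zero_rpow (hα _).ne', add_zero, Real.one_rpow, mul_neg,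
    abs_neg]

theorem tendsto_inv_prod_rpow_mul_totalIncrementCov_gsgccCov {α : ι → ℝ} (hα : ∀ i, 0 < α i)
    (β u v : ι → ℝ) :
    Tendsto
      (fun ε : ι → ℝ =>
        (∏ i, ε i ^ α i)⁻¹ * totalIncrementCov (fun τ => gsgccCov α β (ε * τ)) u v)
      (Filter.pi fun _ => 𝓝[>] 0)
      (𝓝 (∏ i, β i * (|u i| ^ α i + |v i| ^ α i - |u i - v i| ^ α i))) := by
  simp only [totalIncrementCov_gsgccCov hα, ← prod_inv_distrib, ← prod_mul_distrib]
  refine tendsto_finsetProd _ fun i _ => ?_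
  have hφ := (hasDerivAt_one_add_rpow_neg_zero (β i)).hasDerivWithinAt (s := Set.Ici 0)
  have hi := tendsto_inv_rpow_smul_increment_of_hasDerivWithinAt hφ (hα i) (u i) (v i)
  simp only [smul_eq_mul, add_zero, Real.one_rpow, neg_neg, mul_comm _ (β i)] at hi
  exact hi.comp (tendsto_eval_pi (fun _ : ι => 𝓝[>] (0 : ℝ)) i)

theorem gsgcc_total_increment_covariance_general {α : ι → ℝ} (hα : ∀ i, 0 < α i)
    (β u v : ι → ℝ) :
    (∀ ε : ι → ℝ, totalIncrementCov (fun τ => gsgccCov α β (ε * τ)) u v =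
      ∏ i, (1 - (1 + |ε i * u i| ^ α i) ^ (-(β i)) - (1 + |ε i * v i| ^ α i) ^ (-(β i))
        + (1 + |ε i * (u i - v i)| ^ α i) ^ (-(β i)))) ∧
    Tendsto
      (fun ε : ι → ℝ =>
        (∏ i, ε i ^ α i)⁻¹ * totalIncrementCov (fun τ => gsgccCov α β (ε * τ)) u v)
      (Filter.pi fun _ => 𝓝[>] 0)
      (𝓝 (∏ i, β i * (|u i| ^ α i + |v i| ^ α i - |u i - v i| ^ α i))) :=
  ⟨totalIncrementCov_gsgccCov hα β u v,
    tendsto_inv_prod_rpow_mul_totalIncrementCov_gsgccCov hα β u v⟩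

end GeneralizedCauchy

/-- Total-increment covariance of the GSGCC: it factorizes over coordinates, and after
normalization by `Π εᵢ^{αᵢ}` converges, as each `εᵢ → 0⁺`, to
`Πᵢ βᵢ(|uᵢ|^{αᵢ} + |vᵢ|^{αᵢ} − |uᵢ−vᵢ|^{αᵢ})`, which up to the factor `Πᵢ 2βᵢ` is the
covariance of the fractional Brownian sheet of index `α/2`. -/
theorem gsgcc_total_increment_covariance (n : ℕ) (hn : 1 ≤ n) (α β : Fin n → ℝ)
    (hα : ∀ i, α i ∈ Set.Ioc (0 : ℝ) 2) (hβ : ∀ i, 0 < β i) (u v : Fin n → ℝ) :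
    (∀ ε : Fin n → ℝ, (∀ i, 0 < ε i) →
      (∑ δ : Fin n → Bool, ∑ η : Fin n → Bool,
          (-1 : ℝ) ^ ((∑ i, (if δ i then 1 else 0)) + ∑ i, (if η i then 1 else 0) : ℕ) *
            ∏ i, (1 + |ε i * ((if δ i then u i else 0) - (if η i then v i else 0))| ^ α i)
              ^ (-(β i)))
        = ∏ i, (1 - (1 + |ε i * u i| ^ α i) ^ (-(β i)) - (1 + |ε i * v i| ^ α i) ^ (-(β i))
            + (1 + |ε i * (u i - v i)| ^ α i) ^ (-(β i))))
    ∧ Tendsto (fun ε : Fin n → ℝ => (∏ i, ε i ^ α i)⁻¹ *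
          ∑ δ : Fin n → Bool, ∑ η : Fin n → Bool,
            (-1 : ℝ) ^ ((∑ i, (if δ i then 1 else 0)) + ∑ i, (if η i then 1 else 0) : ℕ) *
              ∏ i, (1 + |ε i * ((if δ i then u i else 0) - (if η i then v i else 0))| ^ α i)
                ^ (-(β i)))
        (Filter.pi fun _ : Fin n => nhdsWithin 0 (Set.Ioi 0))
        (nhds (∏ i, β i * (|u i| ^ α i + |v i| ^ α i - |u i - v i| ^ α i))) :=
  (gsgcc_total_increment_covariance_general (fun i => (hα i).1) β u v).imp_left
    fun factorization ε _ => factorization ε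
end

section
/- Let n ≥ 1, α ∈ (0,2]ⁿ, β ∈ (0,∞)ⁿ, and M > 0. Then there exist constants 0 < c₁ ≤ c₂ such that for all x ∈ ℝⁿ with |xᵢ| ≤ M for every i, c₁ Σ_{i=1}^n |xᵢ|^{αᵢ} ≤ 1 − Π_{i=1}^n (1 + |xᵢ|^{αᵢ})^{−βᵢ} ≤ c₂ Σ_{i=1}^n |xᵢ|^{αᵢ}. (Since the increment variance of the GSGCC is ⟨[X^#(t) − X^#(s)]²⟩ = 2(1 − C^#_{α,β}(t−s)), this gives the two-sided increment-variance bound over any hyperrectangle used to compute the Hausdorff dimension of the graph of GSGCC.) -/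
open Finset

/-!
Write `tᵢ = |xᵢ|^{αᵢ}` and `A = Σᵢ tᵢ`. Since `(1 + t)^{-β} ≥ e^{-βt}`, the product is at least
`e^{-Σ βᵢtᵢ} ≥ 1 - Σ βᵢtᵢ`. Conversely, if `b > 0` bounds the `βᵢ` from below, then
`Πᵢ (1 + tᵢ)^{-βᵢ} ≤ (Πᵢ (1 + tᵢ))^{-b} ≤ (1 + A)^{-b}`, and the Bernoulli-type inequality
`(1 + A)^b ≥ 1 + bA / (1 + A)` gives `1 - (1 + A)^{-b} ≥ bA / (1 + (1 + b)A)`, which is linear in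
`A` as long as `A` stays bounded.
-/

theorem one_add_sum_le_prod_one_add {ι R : Type*} [CommSemiring R] [PartialOrder R]
    [IsOrderedRing R] (s : Finset ι) {t : ι → R} (ht : ∀ i ∈ s, 0 ≤ t i) :
    1 + ∑ i ∈ s, t i ≤ ∏ i ∈ s, (1 + t i) := by
  induction s using Finset.cons_induction with
  | empty => simp
  | cons j s hj ih =>
    rw [forall_mem_cons] at ht
    have hsum : 0 ≤ ∑ i ∈ s, t i := sum_nonneg ht.2
    rw [sum_cons, prod_cons]
    calc 1 + (t j + ∑ i ∈ s, t i)
        ≤ 1 + (t j + ∑ i ∈ s, t i) + t j * ∑ i ∈ s, t i :=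
          le_add_of_nonneg_right (mul_nonneg ht.1 hsum)
      _ = (1 + t j) * (1 + ∑ i ∈ s, t i) := by ring
      _ ≤ (1 + t j) * ∏ i ∈ s, (1 + t i) :=
          mul_le_mul_of_nonneg_left (ih ht.2) (add_nonneg zero_le_one ht.1)

theorem one_add_mul_one_sub_inv_le_rpow {x b : ℝ} (hx : 0 < x) (hb : 0 ≤ b) :
    1 + b * (1 - x⁻¹) ≤ x ^ b :=
  calc 1 + b * (1 - x⁻¹)
      ≤ 1 + Real.log x * b := by
        rw [mul_comm b]
        gcongr
        exact Real.one_sub_inv_le_log_of_pos hx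
    _ ≤ Real.exp (Real.log x * b) := by
        rw [add_comm]
        exact Real.add_one_le_exp _
    _ = x ^ b := (Real.rpow_def_of_pos hx b).symm

theorem mul_div_le_one_sub_one_add_rpow_neg {a b : ℝ} (ha : 0 ≤ a) (hb : 0 ≤ b) :
    b * a / (1 + (1 + b) * a) ≤ 1 - (1 + a) ^ (-b) := by
  have hbern : (1 + (1 + b) * a) / (1 + a) ≤ (1 + a) ^ b :=
    calc (1 + (1 + b) * a) / (1 + a) = 1 + b * (1 - (1 + a)⁻¹) := by
          field_simp
          ring
      _ ≤ (1 + a) ^ b := one_add_mul_one_sub_inv_le_rpow (by positivity) hb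
  calc b * a / (1 + (1 + b) * a) = 1 - ((1 + (1 + b) * a) / (1 + a))⁻¹ := by
        field_simp
        ring
    _ ≤ 1 - ((1 + a) ^ b)⁻¹ := by gcongr
    _ = 1 - (1 + a) ^ (-b) := by rw [Real.rpow_neg (by positivity)]

theorem exp_neg_mul_le_one_add_rpow_neg {t b : ℝ} (ht : -1 < t) (hb : 0 ≤ b) :
    Real.exp (-(b * t)) ≤ (1 + t) ^ (-b) := by
  have hpos : 0 < 1 + t := by linarith
  have hlog : Real.log (1 + t) ≤ t := by linarith [Real.log_le_sub_one_of_pos hpos]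
  rw [Real.rpow_def_of_pos hpos, mul_neg, mul_comm _ b]
  gcongr

section Product

variable {ι : Type*} (s : Finset ι) {t β : ι → ℝ}

theorem one_sub_prod_one_add_rpow_neg_le (ht : ∀ i ∈ s, -1 < t i) (hβ : ∀ i ∈ s, 0 ≤ β i) :
    1 - ∏ i ∈ s, (1 + t i) ^ (-(β i)) ≤ ∑ i ∈ s, β i * t i := by
  have hexp : Real.exp (-∑ i ∈ s, β i * t i) ≤ ∏ i ∈ s, (1 + t i) ^ (-(β i)) := by
    rw [← sum_neg_distrib, Real.exp_sum]
    exact prod_le_prod (fun _ _ => (Real.exp_pos _).le)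
      fun i hi => exp_neg_mul_le_one_add_rpow_neg (ht i hi) (hβ i hi)
  linarith [Real.one_sub_le_exp_neg (∑ i ∈ s, β i * t i)]

theorem prod_one_add_rpow_neg_le {b : ℝ} (hb : 0 ≤ b) (ht : ∀ i ∈ s, 0 ≤ t i)
    (hbβ : ∀ i ∈ s, b ≤ β i) :
    ∏ i ∈ s, (1 + t i) ^ (-(β i)) ≤ (1 + ∑ i ∈ s, t i) ^ (-b) := by
  have hone : ∀ i ∈ s, 1 ≤ 1 + t i := fun i hi => le_add_of_nonneg_right (ht i hi)
  have hnonneg : ∀ i ∈ s, 0 ≤ 1 + t i := fun i hi => zero_le_one.trans (hone i hi)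
  calc ∏ i ∈ s, (1 + t i) ^ (-(β i))
      ≤ ∏ i ∈ s, (1 + t i) ^ (-b) :=
        prod_le_prod (fun i hi => Real.rpow_nonneg (hnonneg i hi) _) fun i hi =>
          Real.rpow_le_rpow_of_exponent_le (hone i hi) (neg_le_neg (hbβ i hi))
    _ = (∏ i ∈ s, (1 + t i)) ^ (-b) := Real.finsetProd_rpow s _ hnonneg _
    _ ≤ (1 + ∑ i ∈ s, t i) ^ (-b) :=
        Real.rpow_le_rpow_of_nonpos (add_pos_of_pos_of_nonneg one_pos (sum_nonneg ht))
          (one_add_sum_le_prod_one_add s ht) (neg_nonpos.2 hb)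

theorem mul_sum_div_le_one_sub_prod_one_add_rpow_neg {b : ℝ} (hb : 0 ≤ b)
    (ht : ∀ i ∈ s, 0 ≤ t i) (hbβ : ∀ i ∈ s, b ≤ β i) :
    b * (∑ i ∈ s, t i) / (1 + (1 + b) * ∑ i ∈ s, t i) ≤
      1 - ∏ i ∈ s, (1 + t i) ^ (-(β i)) :=
  (mul_div_le_one_sub_one_add_rpow_neg (sum_nonneg ht) hb).trans
    (sub_le_sub_left (prod_one_add_rpow_neg_le s hb ht hbβ) 1)

end Product

theorem gsgcc_increment_variance_bounds_general {ι : Type*} [Fintype ι] {α β : ι → ℝ}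
    (hα : ∀ i, 0 ≤ α i) (hβ : ∀ i, 0 < β i) (M : ℝ) :
    ∃ c₁ c₂ : ℝ, 0 < c₁ ∧ c₁ ≤ c₂ ∧ ∀ x : ι → ℝ, (∀ i, |x i| ≤ M) →
      c₁ * ∑ i, |x i| ^ α i ≤ 1 - ∏ i, (1 + |x i| ^ α i) ^ (-(β i)) ∧
      1 - ∏ i, (1 + |x i| ^ α i) ^ (-(β i)) ≤ c₂ * ∑ i, |x i| ^ α i := by
  obtain ⟨b, hb, hbβ⟩ : ∃ b, 0 < b ∧ ∀ i, b < β i := by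
    simpa only [zero_add] using Pi.exists_forall_pos_add_lt hβ
  obtain ⟨B, hβB⟩ := Finite.exists_le β
  set c := b / (1 + (1 + b) * ∑ i, |M| ^ α i)
  refine ⟨c, max c B, by positivity, le_max_left _ _, fun x hx => ⟨?_, ?_⟩⟩
  · have hsum : ∑ i, |x i| ^ α i ≤ ∑ i, |M| ^ α i := sum_le_sum fun i _ =>
      Real.rpow_le_rpow (abs_nonneg _) ((hx i).trans (le_abs_self M)) (hα i)
    calc b / (1 + (1 + b) * ∑ i, |M| ^ α i) * ∑ i, |x i| ^ α i
        ≤ b / (1 + (1 + b) * ∑ i, |x i| ^ α i) * ∑ i, |x i| ^ α i := by gcongr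
      _ = b * (∑ i, |x i| ^ α i) / (1 + (1 + b) * ∑ i, |x i| ^ α i) := div_mul_eq_mul_div ..
      _ ≤ _ := mul_sum_div_le_one_sub_prod_one_add_rpow_neg _ hb.le
          (fun _ _ => by positivity) fun i _ => (hbβ i).le
  · calc _ ≤ ∑ i, β i * |x i| ^ α i := one_sub_prod_one_add_rpow_neg_le _
          (fun _ _ => neg_one_lt_zero.trans_le (by positivity)) fun i _ => (hβ i).le
      _ ≤ ∑ i, max c B * |x i| ^ α i := by
          gcongr with i
          exact (hβB i).trans (le_max_right c B)
      _ = max c B * ∑ i, |x i| ^ α i := (mul_sum ..).symm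

/-- Two-sided increment-variance bound for the GSGCC over a hyperrectangle: for
`α ∈ (0,2]ⁿ`, `β ∈ (0,∞)ⁿ` and `M > 0`, there are constants `0 < c₁ ≤ c₂` such that
`c₁ Σᵢ|xᵢ|^{αᵢ} ≤ 1 − Πᵢ(1+|xᵢ|^{αᵢ})^{−βᵢ} ≤ c₂ Σᵢ|xᵢ|^{αᵢ}` whenever `|xᵢ| ≤ M` for all `i`. -/
theorem gsgcc_increment_variance_bounds (n : ℕ) (hn : 1 ≤ n) (α β : Fin n → ℝ)
    (hα : ∀ i, α i ∈ Set.Ioc (0 : ℝ) 2) (hβ : ∀ i, 0 < β i) (M : ℝ) (hM : 0 < M) :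
    ∃ c₁ c₂ : ℝ, 0 < c₁ ∧ c₁ ≤ c₂ ∧ ∀ x : Fin n → ℝ, (∀ i, |x i| ≤ M) →
      c₁ * ∑ i, |x i| ^ α i ≤ 1 - ∏ i, (1 + |x i| ^ α i) ^ (-(β i)) ∧
      1 - ∏ i, (1 + |x i| ^ α i) ^ (-(β i)) ≤ c₂ * ∑ i, |x i| ^ α i :=
  gsgcc_increment_variance_bounds_general (fun i => (hα i).1.le) hβ M
end

section
/- Let n ≥ 1, α ∈ (0,2], β > 0, and fix t ∈ ℝ₊ⁿ (all coordinates tᵢ > 0). Then ∫_{ℝ₊ⁿ} [ 1 + ( Σ_{i=1}^n (ln(1 + τᵢ/tᵢ))² )^{α/2} ]^{−β} dⁿτ = ∞. (This integrand is the correlation function R(t+τ, t) of both Lamperti transforms Y_{α,β} and 𝕐_{α,β} of the GFGCC, for any H; hence these self-similar Gaussian fields are long range dependent for all α ∈ (0,2] and β > 0.) -/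
open MeasureTheory

/-!
In the coordinates `uᵢ = ln (1 + τᵢ / tᵢ)` Lebesgue measure becomes `∏ᵢ tᵢ exp uᵢ duᵢ`, while the
correlation depends on `‖u‖` alone. The cube `(M, M + 1)ⁿ` in these coordinates has measure
proportional to `exp (n M)`, and `‖u‖ ≤ √n (M + 1)` on it, so a correlation that decays no faster
than `exp (-ε ‖u‖)` with `ε < √n` contributes at least a constant times `exp ((n - ε √n) M)` there.
A correlation with polynomial decay satisfies this for every `ε > 0`.
-/

section

open Set Filter Asymptotics Topology

theorem setLIntegral_eq_top_of_tendsto_mul_measure {X κ : Type*} [MeasurableSpace X]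
    {μ : Measure X} {l : Filter κ} [l.NeBot] {f : X → ENNReal} {A : Set X} {s : κ → Set X}
    {c : κ → ENNReal} (hs : ∀ k, MeasurableSet (s k)) (hsA : ∀ᶠ k in l, s k ⊆ A)
    (hcf : ∀ᶠ k in l, ∀ x ∈ s k, c k ≤ f x) (hc : Tendsto (fun k ↦ c k * μ (s k)) l (𝓝 ⊤)) :
    ∫⁻ x in A, f x ∂μ = ⊤ := by
  refine top_le_iff.mp (le_of_tendsto hc ?_)
  filter_upwards [hsA, hcf] with k hkA hkf
  calc c k * μ (s k) = ∫⁻ _ in s k, c k ∂μ := (setLIntegral_const _ _).symm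
    _ ≤ ∫⁻ x in s k, f x ∂μ := setLIntegral_mono' (hs k) hkf
    _ ≤ ∫⁻ x in A, f x ∂μ := lintegral_mono_set hkA

theorem two_rpow_mul_rpow_le_one_add_rpow_rpow {r : ℝ} (hr : 1 ≤ r) (α β : ℝ) :
    2 ^ (-|β|) * r ^ (-(|α| * |β|)) ≤ (1 + r ^ α) ^ (-β) := by
  have hr₀ : 0 ≤ r := zero_le_one.trans hr
  have hpow : 0 < r ^ α := Real.rpow_pos_of_pos (one_pos.trans_le hr) α
  have hbase : 1 + r ^ α ≤ 2 * r ^ |α| := by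
    linarith [Real.rpow_le_rpow_of_exponent_le hr (le_abs_self α),
      Real.one_le_rpow hr (abs_nonneg α)]
  calc 2 ^ (-|β|) * r ^ (-(|α| * |β|)) = (2 * r ^ |α|) ^ (-|β|) := by
        rw [Real.mul_rpow zero_le_two (Real.rpow_nonneg hr₀ _), ← Real.rpow_mul hr₀, mul_neg]
    _ ≤ (1 + r ^ α) ^ (-|β|) :=
        Real.rpow_le_rpow_of_nonpos (by positivity) hbase (neg_nonpos.mpr (abs_nonneg β))
    _ ≤ (1 + r ^ α) ^ (-β) :=
        Real.rpow_le_rpow_of_exponent_le (by linarith) (neg_le_neg (le_abs_self β))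

theorem exp_neg_mul_isBigO_one_add_rpow_rpow {ε : ℝ} (hε : 0 < ε) (α β : ℝ) :
    (fun r ↦ Real.exp (-ε * r)) =O[atTop] fun r ↦ (1 + r ^ α) ^ (-β) := by
  have hpower : (fun r : ℝ ↦ r ^ (-(|α| * |β|))) =O[atTop] fun r ↦ (1 + r ^ α) ^ (-β) := by
    refine IsBigO.of_bound (2 ^ |β|) ?_
    filter_upwards [eventually_ge_atTop 1] with r hr
    have hr₀ : 0 ≤ r := zero_le_one.trans hr
    rw [Real.norm_of_nonneg (Real.rpow_nonneg hr₀ _), Real.norm_of_nonneg (by positivity),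
      ← inv_mul_le_iff₀ (by positivity), ← Real.rpow_neg zero_le_two]
    exact two_rpow_mul_rpow_le_one_add_rpow_rpow hr α β
  exact (isLittleO_exp_neg_mul_rpow_atTop hε _).isBigO.trans hpower

variable {ι : Type*} {t τ : ι → ℝ} {M : ℝ}

/-- For positive `t`, the box of lags `τ` for which all `ln (1 + τᵢ / tᵢ)` lie in `(M, M + 1)`,
encoded by its sides in the coordinates `τᵢ`. -/
def logCube (t : ι → ℝ) (M : ℝ) : Set (ι → ℝ) :=
  univ.pi fun i ↦ Ioo (t i * (Real.exp M - 1)) (t i * (Real.exp (M + 1) - 1))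

theorem measurableSet_logCube [Countable ι] (t : ι → ℝ) (M : ℝ) : MeasurableSet (logCube t M) :=
  MeasurableSet.univ_pi fun _ ↦ measurableSet_Ioo

theorem logCube_subset_pos (ht : ∀ i, 0 < t i) (hM : 0 ≤ M) :
    logCube t M ⊆ {τ | ∀ i, 0 < τ i} := fun _ hτ i ↦
  (mul_nonneg (ht i).le (sub_nonneg.mpr (Real.one_le_exp hM))).trans_lt (hτ i (mem_univ i)).1

theorem log_one_add_div_mem_Ioo (ht : ∀ i, 0 < t i) (hτ : τ ∈ logCube t M) (i : ι) :
    Real.log (1 + τ i / t i) ∈ Ioo M (M + 1) := by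
  obtain ⟨hlow, hupp⟩ := hτ i (mem_univ i)
  have hlow' : Real.exp M < 1 + τ i / t i := by
    linarith [(lt_div_iff₀' (ht i)).mpr hlow]
  have hupp' : 1 + τ i / t i < Real.exp (M + 1) := by
    linarith [(div_lt_iff₀' (ht i)).mpr hupp]
  have hpos := (Real.exp_pos M).trans hlow'
  exact ⟨(Real.lt_log_iff_exp_lt hpos).mpr hlow', (Real.log_lt_iff_lt_exp hpos).mpr hupp'⟩

variable [Fintype ι]

theorem volume_logCube (ht : ∀ i, 0 < t i) (M : ℝ) :
    volume (logCube t M) =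
      ENNReal.ofReal ((∏ i, t i * (Real.exp 1 - 1)) * Real.exp (Fintype.card ι * M)) := by
  have side (i : ι) : t i * (Real.exp (M + 1) - 1) - t i * (Real.exp M - 1) =
      t i * (Real.exp 1 - 1) * Real.exp M := by
    rw [Real.exp_add]; ring
  have side_nonneg (i : ι) : 0 ≤ t i * (Real.exp 1 - 1) * Real.exp M := by
    have := ht i
    have := sub_nonneg.mpr (Real.one_le_exp zero_le_one)
    positivity
  simp only [logCube, Real.volume_pi_Ioo, side]
  rw [← ENNReal.ofReal_prod_of_nonneg fun i _ ↦ side_nonneg i, Finset.prod_mul_distrib,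
    Finset.prod_const, Finset.card_univ, Real.exp_nat_mul]

/-- The Euclidean distance between `ln t` and `ln (t + τ)`, for `t` and `t + τ` in the open positive
orthant: the lag of the stationary field underlying the Lamperti transform. -/
noncomputable def logLag (t τ : ι → ℝ) : ℝ :=
  √(∑ i, Real.log (1 + τ i / t i) ^ 2)

theorem le_logLag [Nonempty ι] (ht : ∀ i, 0 < t i) (hM : 0 ≤ M) (hτ : τ ∈ logCube t M) :
    M ≤ logLag t τ := by
  obtain ⟨i⟩ := ‹Nonempty ι›
  refine Real.le_sqrt_of_sq_le ?_
  calc M ^ 2 ≤ Real.log (1 + τ i / t i) ^ 2 :=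
        pow_le_pow_left₀ hM (log_one_add_div_mem_Ioo ht hτ i).1.le 2
    _ ≤ ∑ j, Real.log (1 + τ j / t j) ^ 2 :=
        Finset.single_le_sum (f := fun j ↦ Real.log (1 + τ j / t j) ^ 2)
          (fun j _ ↦ sq_nonneg _) (Finset.mem_univ i)

theorem logLag_le (ht : ∀ i, 0 < t i) (hM : 0 ≤ M) (hτ : τ ∈ logCube t M) :
    logLag t τ ≤ √(Fintype.card ι) * (M + 1) := by
  have hsq (i : ι) : Real.log (1 + τ i / t i) ^ 2 ≤ (M + 1) ^ 2 :=
    have hlog := log_one_add_div_mem_Ioo ht hτ i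
    pow_le_pow_left₀ (hM.trans hlog.1.le) hlog.2.le 2
  calc logLag t τ ≤ √(∑ _i : ι, (M + 1) ^ 2) :=
        Real.sqrt_le_sqrt (Finset.sum_le_sum fun i _ ↦ hsq i)
    _ = √(Fintype.card ι) * (M + 1) := by
        rw [Finset.sum_const, Finset.card_univ, nsmul_eq_mul, Real.sqrt_mul (Nat.cast_nonneg _),
          Real.sqrt_sq (by positivity)]

theorem tendsto_exp_mul_volume_logCube_atTop [Nonempty ι] (ht : ∀ i, 0 < t i) {a ε : ℝ}
    (ha : 0 < a) (hε : ε < √(Fintype.card ι)) :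
    Tendsto (fun M ↦ ENNReal.ofReal (a * Real.exp (-ε * (√(Fintype.card ι) * (M + 1)))) *
      volume (logCube t M)) atTop (𝓝 ⊤) := by
  set n : ℝ := (Fintype.card ι : ℝ)
  have hn : 0 < n := Nat.cast_pos.mpr Fintype.card_pos
  have hrate : 0 < n - ε * √n := by
    nlinarith [Real.mul_self_sqrt hn.le, Real.sqrt_pos.mpr hn]
  set K : ℝ := a * Real.exp (-ε * √n) * ∏ i, t i * (Real.exp 1 - 1)
  have hK : 0 < K :=
    mul_pos (by positivity) (Finset.prod_pos fun i _ ↦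
      mul_pos (ht i) (sub_pos.mpr (Real.one_lt_exp_iff.mpr one_pos)))
  have hmass (M : ℝ) : ENNReal.ofReal (a * Real.exp (-ε * (√n * (M + 1)))) *
      volume (logCube t M) = ENNReal.ofReal (K * Real.exp ((n - ε * √n) * M)) := by
    rw [volume_logCube ht, ← ENNReal.ofReal_mul (by positivity),
      show -ε * (√n * (M + 1)) = -ε * √n + -(ε * √n * M) by ring,
      show (n - ε * √n) * M = -(ε * √n * M) + n * M by ring, Real.exp_add, Real.exp_add]
    congr 1
    ring
  simp only [hmass]
  exact ENNReal.tendsto_ofReal_atTop.comp <| (Real.tendsto_exp_atTop.comp <|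
    tendsto_id.const_mul_atTop hrate).const_mul_atTop hK

theorem lintegral_enorm_comp_logLag_eq_top (ht : ∀ i, 0 < t i) {C : ℝ → ℝ} {ε : ℝ}
    (hε₀ : 0 ≤ ε) (hε : ε < √(Fintype.card ι))
    (hC : (fun r ↦ Real.exp (-ε * r)) =O[atTop] C) :
    ∫⁻ τ in {τ : ι → ℝ | ∀ i, 0 < τ i}, ‖C (logLag t τ)‖ₑ = ⊤ := by
  have : Nonempty ι :=
    Fintype.card_pos_iff.mp (Nat.cast_pos.mp (Real.sqrt_pos.mp (hε₀.trans_lt hε)))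
  obtain ⟨c, hc, hcC⟩ := hC.exists_pos
  obtain ⟨R, hR⟩ := eventually_atTop.mp hcC.bound
  refine setLIntegral_eq_top_of_tendsto_mul_measure (measurableSet_logCube t) ?_ ?_
    (tendsto_exp_mul_volume_logCube_atTop ht (inv_pos.mpr hc) hε)
  · filter_upwards [eventually_ge_atTop 0] with M hM using logCube_subset_pos ht hM
  · filter_upwards [eventually_ge_atTop 0, eventually_ge_atTop R] with M hM hRM τ hτ
    rw [← ofReal_norm]
    refine ENNReal.ofReal_le_ofReal ((inv_mul_le_iff₀ hc).mpr ?_)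
    calc Real.exp (-ε * (√(Fintype.card ι) * (M + 1))) ≤ Real.exp (-ε * logLag t τ) :=
          Real.exp_le_exp.mpr <|
            mul_le_mul_of_nonpos_left (logLag_le ht hM hτ) (neg_nonpos.mpr hε₀)
      _ ≤ c * ‖C (logLag t τ)‖ :=
          (le_abs_self _).trans (hR _ (hRM.trans (le_logLag ht hM hτ)))

theorem gfgcc_lamperti_lrd_general [Nonempty ι] (α β : ℝ) (ht : ∀ i, 0 < t i) :
    ∫⁻ τ in {τ : ι → ℝ | ∀ i, 0 < τ i},
      ENNReal.ofReal ((1 + (∑ i, Real.log (1 + τ i / t i) ^ 2) ^ (α / 2)) ^ (-β)) = ⊤ := by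
  have hcorr (τ : ι → ℝ) :
      ENNReal.ofReal ((1 + (∑ i, Real.log (1 + τ i / t i) ^ 2) ^ (α / 2)) ^ (-β)) =
        ‖(1 + logLag t τ ^ α) ^ (-β)‖ₑ := by
    have hpow : 0 ≤ logLag t τ ^ α := Real.rpow_nonneg (Real.sqrt_nonneg _) α
    rw [Real.rpow_div_two_eq_sqrt α (Finset.sum_nonneg fun i _ ↦ sq_nonneg _), ← logLag,
      Real.enorm_of_nonneg (Real.rpow_nonneg (add_nonneg zero_le_one hpow) _)]
  have hhalf : (1 / 2 : ℝ) < √(Fintype.card ι) :=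
    one_half_lt_one.trans_le (Real.one_le_sqrt.mpr (Nat.one_le_cast.mpr Fintype.card_pos))
  simp only [hcorr]
  exact lintegral_enorm_comp_logLag_eq_top ht one_half_pos.le hhalf
    (exp_neg_mul_isBigO_one_add_rpow_rpow one_half_pos α β)

end

/-- Long range dependence of the Lamperti transforms of the GFGCC: for `α ∈ (0,2]`, `β > 0`
and fixed `t ∈ ℝ₊ⁿ`, the correlation function of both `H`-Lamperti transforms of the GFGCC
satisfies `∫_{ℝ₊ⁿ} [1 + (Σᵢ(ln(1+τᵢ/tᵢ))²)^{α/2}]^{−β} dⁿτ = ∞`. -/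
theorem gfgcc_lamperti_lrd (n : ℕ) (hn : 1 ≤ n) (α β : ℝ)
    (hα : α ∈ Set.Ioc (0 : ℝ) 2) (hβ : 0 < β) (t : Fin n → ℝ) (ht : ∀ i, 0 < t i) :
    (∫⁻ τ in {τ : Fin n → ℝ | ∀ i, 0 < τ i},
        ENNReal.ofReal
          ((1 + (∑ i, Real.log (1 + τ i / t i) ^ 2) ^ (α / 2)) ^ (-β))) = ⊤ := by
  have : Nonempty (Fin n) := Fin.pos_iff_nonempty.mp hn
  exact gfgcc_lamperti_lrd_general α β ht
end

section
/- Let n ≥ 1, α ∈ (0,2]ⁿ, β ∈ (0,∞)ⁿ, and fix t ∈ ℝ₊ⁿ (all coordinates tᵢ > 0). Then ∫_{ℝ₊ⁿ} Π_{i=1}^n [ 1 + |ln(1 + τᵢ/tᵢ)|^{αᵢ} ]^{−βᵢ} dⁿτ = ∞. (This integrand is the correlation function R(t+τ, t) of both Lamperti transforms Y^#_{α,β} and 𝕐^#_{α,β} of the GSGCC; hence these (multi-)self-similar Gaussian fields are long range dependent for all admissible α and β.) -/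
open MeasureTheory Finset

/-!
By Tonelli the integral of the product over the orthant is the product of one-dimensional
integrals. In each of these the integrand is a power of `1 + |log (1 + x / t)| ^ a`, and powers of
the logarithm are negligible against `x`; so the integrand dominates `x⁻¹` at infinity and every
one of the finitely many factors is infinite.
-/

section Tonelli

variable {ι : Type*} [Fintype ι] {X : ι → Type*} [∀ i, MeasurableSpace (X i)]
  {μ : ∀ i, Measure (X i)} [∀ i, SigmaFinite (μ i)]

lemma lmarginal_prod_eval [DecidableEq ι] {f : ∀ i, X i → ENNReal} (hf : ∀ i, Measurable (f i))
    (s : Finset ι) :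
    (∫⋯∫⁻_s, (fun x ↦ ∏ i, f i (x i)) ∂μ) =
      fun x ↦ (∏ i ∈ s, ∫⁻ y, f i y ∂μ i) * ∏ i ∈ sᶜ, f i (x i) := by
  have hprod : Measurable fun x : ∀ i, X i ↦ ∏ i, f i (x i) := by fun_prop
  induction s using Finset.induction_on with
  | empty => simp
  | insert i s hi ih =>
    ext x
    have hcompl : sᶜ = insert i (insert i s)ᶜ := by
      rw [Finset.compl_insert, Finset.insert_erase (Finset.mem_compl.mpr hi)]
    have hnotMem : i ∉ (insert i s)ᶜ := by simp
    have hrest (y : X i) : ∏ j ∈ (insert i s)ᶜ, f j (Function.update x i y j) =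
        ∏ j ∈ (insert i s)ᶜ, f j (x j) :=
      Finset.prod_congr rfl fun j hj ↦ by
        rw [Function.update_of_ne (ne_of_mem_of_not_mem hj hnotMem)]
    rw [lmarginal_insert _ hprod hi, ih]
    simp only [hcompl, Finset.prod_insert hnotMem, Function.update_self, hrest]
    rw [lintegral_const_mul _ ((hf i).mul_const _), lintegral_mul_const _ (hf i),
      Finset.prod_insert hi]
    ring

theorem lintegral_pi_prod_eval {f : ∀ i, X i → ENNReal} (hf : ∀ i, Measurable (f i)) :
    ∫⁻ x, ∏ i, f i (x i) ∂Measure.pi μ = ∏ i, ∫⁻ y, f i y ∂μ i := by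
  classical
  rcases isEmpty_or_nonempty (∀ i, X i) with hX | ⟨⟨x⟩⟩
  · obtain ⟨i, hi⟩ := isEmpty_pi.mp hX
    rw [lintegral_of_isEmpty, Finset.prod_eq_zero (Finset.mem_univ i) (lintegral_of_isEmpty _ _)]
  · simpa only [lmarginal_univ, Finset.compl_univ, Finset.prod_empty, mul_one] using
      congrFun (lmarginal_prod_eval (μ := μ) hf Finset.univ) x

theorem setLIntegral_pi_prod_eval {f : ∀ i, X i → ENNReal} (hf : ∀ i, Measurable (f i))
    (s : ∀ i, Set (X i)) :
    ∫⁻ x in Set.univ.pi s, ∏ i, f i (x i) ∂Measure.pi μ = ∏ i, ∫⁻ y in s i, f i y ∂μ i := by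
  rw [Measure.restrict_pi_pi, lintegral_pi_prod_eval hf]

end Tonelli

section HalfLine

open Filter Asymptotics

theorem not_integrableOn_Ioi_of_inv_isBigO {E : Type*} [NormedAddCommGroup E] {f : ℝ → E}
    (hf : (fun x : ℝ ↦ x⁻¹) =O[atTop] f) (a : ℝ) : ¬IntegrableOn f (Set.Ioi a) := by
  refine not_integrableOn_of_tendsto_norm_atTop_of_deriv_isBigO_filter atTop
    (Ioi_mem_atTop a) ?_
    (tendsto_norm_atTop_atTop.comp Real.tendsto_log_atTop) (by rwa [Real.deriv_log'])
  filter_upwards [eventually_ne_atTop 0] with x hx using Real.differentiableAt_log hx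

theorem setLIntegral_Ioi_ofReal_eq_top_of_inv_isBigO {f : ℝ → ℝ} {a : ℝ}
    (hfm : AEStronglyMeasurable f (volume.restrict (Set.Ioi a)))
    (hf₀ : 0 ≤ᵐ[volume.restrict (Set.Ioi a)] f) (hf : (fun x : ℝ ↦ x⁻¹) =O[atTop] f) :
    ∫⁻ x in Set.Ioi a, ENNReal.ofReal (f x) = ⊤ := by
  by_contra hfin
  exact not_integrableOn_Ioi_of_inv_isBigO hf a
    ((lintegral_ofReal_ne_top_iff_integrable hfm hf₀).mp hfin)

theorem isLittleO_one_add_abs_log_rpow_rpow (a b : ℝ) :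
    (fun x : ℝ ↦ (1 + |Real.log x| ^ a) ^ b) =o[atTop] fun x ↦ x := by
  have hbound : (fun x : ℝ ↦ (1 + |Real.log x| ^ a) ^ b) =O[atTop]
      fun x ↦ Real.log x ^ (|a| * |b|) := by
    refine .of_bound (2 ^ |b|) ?_
    filter_upwards [Real.tendsto_log_atTop.eventually_ge_atTop 1] with x hx
    have hlog : 0 ≤ Real.log x := zero_le_one.trans hx
    have hbase : 1 + Real.log x ^ a ≤ 2 * Real.log x ^ |a| := by
      linarith [Real.one_le_rpow hx (abs_nonneg a),
        Real.rpow_le_rpow_of_exponent_le hx (le_abs_self a)]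
    rw [abs_of_nonneg hlog, Real.norm_of_nonneg (by positivity),
      Real.norm_of_nonneg (by positivity)]
    calc (1 + Real.log x ^ a) ^ b
        ≤ (1 + Real.log x ^ a) ^ |b| :=
          Real.rpow_le_rpow_of_exponent_le (le_add_of_nonneg_right (by positivity))
            (le_abs_self b)
      _ ≤ (2 * Real.log x ^ |a|) ^ |b| :=
          Real.rpow_le_rpow (by positivity) hbase (abs_nonneg b)
      _ = 2 ^ |b| * Real.log x ^ (|a| * |b|) := by
          rw [Real.mul_rpow zero_le_two (by positivity), Real.rpow_mul hlog]
  simpa only [Real.rpow_one] using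
    hbound.trans_isLittleO (isLittleO_log_rpow_rpow_atTop (|a| * |b|) one_pos)

theorem inv_isBigO_one_add_abs_log_rpow_rpow_neg (a b : ℝ) {t : ℝ} (ht : 0 < t) :
    (fun x : ℝ ↦ x⁻¹) =O[atTop] fun x ↦ (1 + |Real.log (1 + x / t)| ^ a) ^ (-b) := by
  have hshift : Tendsto (fun x : ℝ ↦ 1 + x / t) atTop atTop :=
    tendsto_atTop_add_const_left _ _ (tendsto_id.atTop_div_const ht)
  have hlinear : (fun x : ℝ ↦ 1 + x / t) =O[atTop] fun x ↦ x := by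
    refine (isLittleO_const_id_atTop 1).isBigO.add ?_
    simpa only [div_eq_inv_mul] using (isBigO_refl (fun x : ℝ ↦ x) atTop).const_mul_left t⁻¹
  have hpos (x : ℝ) : 0 < 1 + |Real.log (1 + x / t)| ^ a := by positivity
  have hbound : (fun x : ℝ ↦ (1 + |Real.log (1 + x / t)| ^ a) ^ b) =O[atTop] fun x ↦ x :=
    ((isLittleO_one_add_abs_log_rpow_rpow a b).comp_tendsto hshift).isBigO.trans hlinear
  simpa only [Real.rpow_neg (hpos _).le] using
    hbound.inv_rev (.of_forall fun x hx ↦ absurd hx (Real.rpow_pos_of_pos (hpos x) b).ne')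

theorem setLIntegral_Ioi_one_add_abs_log_rpow_rpow_neg_eq_top (a b : ℝ) {t : ℝ} (ht : 0 < t) :
    ∫⁻ x in Set.Ioi 0, ENNReal.ofReal ((1 + |Real.log (1 + x / t)| ^ a) ^ (-b)) = ⊤ :=
  setLIntegral_Ioi_ofReal_eq_top_of_inv_isBigO
    (Measurable.aestronglyMeasurable (by fun_prop))
    (.of_forall fun _ ↦ by positivity) (inv_isBigO_one_add_abs_log_rpow_rpow_neg a b ht)

end HalfLine

theorem gsgcc_lamperti_lrd_general {ι : Type*} [Fintype ι] [Nonempty ι] (α β t : ι → ℝ)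
    (ht : ∀ i, 0 < t i) :
    (∫⁻ τ in {τ : ι → ℝ | ∀ i, 0 < τ i},
        ENNReal.ofReal
          (∏ i, (1 + |Real.log (1 + τ i / t i)| ^ α i) ^ (-(β i)))) = ⊤ := by
  let f (i : ι) (x : ℝ) : ℝ := (1 + |Real.log (1 + x / t i)| ^ α i) ^ (-(β i))
  have hf₀ (i : ι) (x : ℝ) : 0 ≤ f i x := by positivity
  have hfm (i : ι) : Measurable fun x ↦ ENNReal.ofReal (f i x) := by fun_prop
  have horthant : {τ : ι → ℝ | ∀ i, 0 < τ i} = Set.univ.pi fun _ ↦ Set.Ioi 0 := by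
    ext; simp
  calc ∫⁻ τ in {τ : ι → ℝ | ∀ i, 0 < τ i}, ENNReal.ofReal (∏ i, f i (τ i))
      = ∫⁻ τ in Set.univ.pi fun _ ↦ Set.Ioi 0, ∏ i, ENNReal.ofReal (f i (τ i)) := by
        simp only [horthant, ENNReal.ofReal_prod_of_nonneg fun i _ ↦ hf₀ i _]
    _ = ∏ i, ∫⁻ x in Set.Ioi 0, ENNReal.ofReal (f i x) := setLIntegral_pi_prod_eval hfm _
    _ = ∏ _i : ι, ⊤ := Finset.prod_congr rfl fun i _ ↦
        setLIntegral_Ioi_one_add_abs_log_rpow_rpow_neg_eq_top (α i) (β i) (ht i)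
    _ = ⊤ := by rw [Finset.prod_const, ENNReal.top_pow Finset.univ_nonempty.card_pos.ne']

/-- Long range dependence of the Lamperti transforms of the GSGCC: for `α ∈ (0,2]ⁿ`,
`β ∈ (0,∞)ⁿ` and fixed `t ∈ ℝ₊ⁿ`, the correlation function of both `H`-Lamperti transforms
of the GSGCC satisfies `∫_{ℝ₊ⁿ} Πᵢ[1 + |ln(1+τᵢ/tᵢ)|^{αᵢ}]^{−βᵢ} dⁿτ = ∞`. -/
theorem gsgcc_lamperti_lrd (n : ℕ) (hn : 1 ≤ n) (α β : Fin n → ℝ)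
    (hα : ∀ i, α i ∈ Set.Ioc (0 : ℝ) 2) (hβ : ∀ i, 0 < β i)
    (t : Fin n → ℝ) (ht : ∀ i, 0 < t i) :
    (∫⁻ τ in {τ : Fin n → ℝ | ∀ i, 0 < τ i},
        ENNReal.ofReal
          (∏ i, (1 + |Real.log (1 + τ i / t i)| ^ α i) ^ (-(β i)))) = ⊤ := by
  have : Nonempty (Fin n) := Fin.pos_iff_nonempty.mp hn
  exact gsgcc_lamperti_lrd_general α β t ht
end
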